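/- arXiv:1304.0947 — 7 statements merged into one kernel-verified Lean document; each statement's English description precedes it below -/
import Mathlib

section
/- Let S be a complex 2×2 matrix. The four matrices I (identity), S, S*, S*S are linearly dependent over ℂ if and only if S is normal (S commutes with its adjoint S*). -/
open MvPolynomial Complex Matrix MeasureTheory ComplexOrder

noncomputable section

universe u

/-- `ℂ[z,z̄]`: the polynomial ring in the `2n` variables `z_j` (encoded `Sum.inl j`)
and `z̄_j` (encoded `Sum.inr j`). -/
abbrev CPoly (n : ℕ) := MvPolynomial (Fin n ⊕ Fin n) ℂ

/-- The involution `f ↦ f*`: conjugate the coefficients and swap `z_j ↔ z̄_j`. -/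
def hermStar (n : ℕ) : CPoly n →+* CPoly n :=
  (MvPolynomial.rename (Sum.swap : Fin n ⊕ Fin n → Fin n ⊕ Fin n)).toRingHom.comp
    (MvPolynomial.map (starRingEnd ℂ))

/-- The inclusion of the holomorphic polynomials `ℂ[z]` into `ℂ[z,z̄]`. -/
def hol (n : ℕ) : MvPolynomial (Fin n) ℂ →ₐ[ℂ] CPoly n :=
  MvPolynomial.rename Sum.inl

/-- Evaluation `f(a,b)` (substituting `a` for `z` and `b` for `z̄`). -/
def evalPair {n : ℕ} (a b : Fin n → ℂ) (f : CPoly n) : ℂ :=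
  MvPolynomial.eval (Sum.elim a b) f

/-- Evaluation `f(a) := f(a, ā)`. -/
def evalAt {n : ℕ} (a : Fin n → ℂ) (f : CPoly n) : ℂ :=
  evalPair a (fun j => (starRingEnd ℂ) (a j)) f

/-- `‖z‖² = |z_1|² + ⋯ + |z_n|²`. -/
def normZ (n : ℕ) : CPoly n := ∑ j : Fin n, X (Sum.inl j) * X (Sum.inr j)

/-- `Σ_h`: hermitian sums of squares `∑ |p_i|²`, `p_i ∈ ℂ[z]` holomorphic. -/
def SigmaH (n : ℕ) : Set (CPoly n) :=
  {f | ∃ (k : ℕ) (p : Fin k → MvPolynomial (Fin n) ℂ),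
    f = ∑ i, hol n (p i) * hermStar n (hol n (p i))}

/-- `Σ`: sums of squares `∑ |p_i|²`, `p_i ∈ ℂ[z,z̄]`. -/
def SigmaFull (n : ℕ) : Set (CPoly n) :=
  {f | ∃ (k : ℕ) (p : Fin k → CPoly n), f = ∑ i, p i * hermStar n (p i)}

/-- Ideals `I ⊆ ℝ[x,y]`, viewed as sets of `*`-fixed elements of `ℂ[z,z̄]`. -/
def IsRealIdeal (n : ℕ) (I : Set (CPoly n)) : Prop :=
  (∀ f ∈ I, hermStar n f = f) ∧ (0 : CPoly n) ∈ I ∧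
    (∀ f ∈ I, ∀ g ∈ I, f + g ∈ I) ∧
    ∀ f : CPoly n, hermStar n f = f → ∀ g ∈ I, f * g ∈ I

/-- The semiring `Σ_h + I`. -/
def SigmaHPlus (n : ℕ) (I : Set (CPoly n)) : Set (CPoly n) :=
  {f | ∃ s ∈ SigmaH n, ∃ g ∈ I, f = s + g}

/-- The real zero set `V_ℝ(I) ⊆ ℂⁿ`. -/
def VR (n : ℕ) (I : Set (CPoly n)) : Set (Fin n → ℂ) :=
  {a | ∀ f ∈ I, evalAt a f = 0}

/-- A subset `M` of `ℝ[x,y]` is archimedean if for every real `f` there is `c ∈ ℝ`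
with `c ± f ∈ M`. -/
def IsArchSet (n : ℕ) (M : Set (CPoly n)) : Prop :=
  ∀ f : CPoly n, hermStar n f = f →
    ∃ c : ℝ, (C (c : ℂ) + f) ∈ M ∧ (C (c : ℂ) - f) ∈ M

/-- Hermitian modules in `ℝ[x,y]`. -/
def IsHermitianModule (n : ℕ) (M : Set (CPoly n)) : Prop :=
  (∀ f ∈ M, hermStar n f = f) ∧ (1 : CPoly n) ∈ M ∧
    (∀ f ∈ M, ∀ g ∈ M, f + g ∈ M) ∧
    ∀ s ∈ SigmaH n, ∀ f ∈ M, s * f ∈ M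

/-- The closed set `X_M ⊆ ℂⁿ` associated with a hermitian module. -/
def XM (n : ℕ) (M : Set (CPoly n)) : Set (Fin n → ℂ) :=
  {a | ∀ g ∈ M, 0 ≤ (evalAt a g).re}

/-- Hereditary calculus `ψ_T` for a tuple of bounded operators:
`ψ_T(z^α z̄^β) = T^{*β} T^α` (adjoints to the left). -/
def psiOp {n : ℕ} {E : Type u} [NormedAddCommGroup E] [InnerProductSpace ℂ E]
    [CompleteSpace E] (T : Fin n → E →L[ℂ] E) (f : CPoly n) : E →L[ℂ] E :=
  ∑ m ∈ f.support, f.coeff m •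
    ((List.ofFn fun j => (ContinuousLinearMap.adjoint (T j)) ^ (m (Sum.inr j))).prod *
     (List.ofFn fun j => (T j) ^ (m (Sum.inl j))).prod)

/-- Hereditary calculus `ψ_T` for a tuple of matrices. -/
def psiMat {n m : ℕ} (T : Fin n → Matrix (Fin m) (Fin m) ℂ) (f : CPoly n) :
    Matrix (Fin m) (Fin m) ℂ :=
  ∑ mo ∈ f.support, f.coeff mo •
    ((List.ofFn fun j => ((T j)ᴴ) ^ (mo (Sum.inr j))).prod *
     (List.ofFn fun j => (T j) ^ (mo (Sum.inl j))).prod)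

/-- A commuting tuple `T` on a Hilbert space `E` is subnormal if it extends to a
commuting tuple of bounded normal operators on a larger Hilbert space `E'`,
leaving (the image of) `E` invariant. -/
def IsSubnormal {n : ℕ} {E : Type u} [NormedAddCommGroup E] [InnerProductSpace ℂ E]
    [CompleteSpace E] (T : Fin n → E →L[ℂ] E) : Prop :=
  ∃ (E' : Type u) (_ : NormedAddCommGroup E') (_ : InnerProductSpace ℂ E')
    (_ : CompleteSpace E') (ι : E →ₗᵢ[ℂ] E') (N : Fin n → E' →L[ℂ] E'),
      (∀ i j, Commute (N i) (N j)) ∧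
      (∀ j, Commute (N j) (ContinuousLinearMap.adjoint (N j))) ∧
      ∀ j x, N j (ι x) = ι (T j x)

/-- The "diamond" ideal `I(a,b)`. -/
def Iab {n : ℕ} (a b : Fin n → ℂ) : Set (CPoly n) :=
  {f | evalPair a (fun j => (starRingEnd ℂ) (a j)) f = 0 ∧
       evalPair a (fun j => (starRingEnd ℂ) (b j)) f = 0 ∧
       evalPair b (fun j => (starRingEnd ℂ) (a j)) f = 0 ∧
       evalPair b (fun j => (starRingEnd ℂ) (b j)) f = 0}

/-- The degenerate ideal `J(a,U)`. -/
def Jau {n : ℕ} (a : Fin n → ℂ) (U : Matrix (Fin n) (Fin n) ℂ) : Set (CPoly n) :=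
  {f | evalAt a f = 0 ∧
    U.mulVec (fun k => evalAt a (pderiv (Sum.inl k) f)) = 0 ∧
    (U.map (starRingEnd ℂ)).mulVec (fun k => evalAt a (pderiv (Sum.inr k) f)) = 0 ∧
    Matrix.trace
      (U * Matrix.of fun j k => evalAt a (pderiv (Sum.inr k) (pderiv (Sum.inl j) f))) = 0}

/-- Coordinates of a `2×2` matrix. -/
def coordMap : Matrix (Fin 2) (Fin 2) ℂ →ₗ[ℂ] (Fin 4 → ℂ) where
  toFun X := ![X 0 0, X 0 1, X 1 0, X 1 1]
  map_add' X Y := by ext i; fin_cases i <;> simp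
  map_smul' r X := by ext i; fin_cases i <;> simp

lemma coordMap_ker : LinearMap.ker coordMap = ⊥ := by
  rw [LinearMap.ker_eq_bot']
  intro X hX
  have h0 := congrFun hX 0
  have h1 := congrFun hX 1
  have h2 := congrFun hX 2
  have h3 := congrFun hX 3
  simp [coordMap] at h0 h1 h2 h3
  ext i j
  fin_cases i <;> fin_cases j <;> simp [h0, h1, h2, h3]

lemma det_identity (S : Matrix (Fin 2) (Fin 2) ℂ) :
    (Matrix.of (coordMap ∘ ![(1 : Matrix (Fin 2) (Fin 2) ℂ), S, Sᴴ, Sᴴ * S])).det =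
      -(S * Sᴴ - Sᴴ * S).det := by
  rw [Matrix.det_fin_two, Matrix.det_succ_row_zero]
  simp [Fin.sum_univ_succ, Matrix.det_fin_three, coordMap, Matrix.mul_apply, Fin.succAbove,
    Matrix.one_apply]
  ring

lemma comm_det (S : Matrix (Fin 2) (Fin 2) ℂ) :
    (S * Sᴴ - Sᴴ * S).det = 0 ↔ Commute S Sᴴ := by
  constructor
  · intro h
    have hH : (S * Sᴴ - Sᴴ * S)ᴴ = S * Sᴴ - Sᴴ * S := by
      simp [Matrix.conjTranspose_sub, Matrix.conjTranspose_mul]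
    have ht : (S * Sᴴ - Sᴴ * S).trace = 0 := by
      rw [Matrix.trace_sub, Matrix.trace_mul_comm, sub_self]
    have key : S * Sᴴ - Sᴴ * S = 0 := by
      generalize S * Sᴴ - Sᴴ * S = K at *
      have e00 := congrFun (congrFun hH 0) 0
      have e10 := congrFun (congrFun hH 1) 0
      rw [Matrix.conjTranspose_apply] at e00 e10
      rw [Matrix.trace_fin_two] at ht
      rw [Matrix.det_fin_two] at h
      have h11 : K 1 1 = - K 0 0 := by linear_combination ht
      have h2 : K 0 0 * star (K 0 0) + K 0 1 * star (K 0 1) = 0 := by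
        rw [e00, e10]; linear_combination K 0 0 * h11 - h
      have h3 : Complex.normSq (K 0 0) + Complex.normSq (K 0 1) = 0 := by
        have : ((Complex.normSq (K 0 0) + Complex.normSq (K 0 1) : ℝ) : ℂ) = 0 := by
          push_cast
          rw [← Complex.mul_conj, ← Complex.mul_conj]
          exact h2
        exact_mod_cast this
      have p := Complex.normSq_nonneg (K 0 0)
      have q := Complex.normSq_nonneg (K 0 1)
      have z0 : K 0 0 = 0 := Complex.normSq_eq_zero.mp (by linarith)
      have z1 : K 0 1 = 0 := Complex.normSq_eq_zero.mp (by linarith)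
      have z2 : K 1 0 = 0 := by rw [← e10, z1, star_zero]
      ext i j
      fin_cases i <;> fin_cases j <;> simp [z0, z1, z2, h11]
    exact sub_eq_zero.mp key
  · intro h
    rw [h.eq, sub_self, Matrix.det_fin_two]
    simp

/-- Lemma `nml2x2`: for a complex `2×2` matrix `S`, the matrices `I, S, S*, S*S` are
linearly dependent iff `S` is normal. -/
theorem statement4 (S : Matrix (Fin 2) (Fin 2) ℂ) :
    ¬ LinearIndependent ℂ ![(1 : Matrix (Fin 2) (Fin 2) ℂ), S, Sᴴ, Sᴴ * S] ↔
      Commute S Sᴴ := by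
  rw [← comm_det, ← coordMap.linearIndependent_iff coordMap_ker]
  have h := Matrix.linearIndependent_rows_iff_isUnit
    (A := Matrix.of (coordMap ∘ ![(1 : Matrix (Fin 2) (Fin 2) ℂ), S, Sᴴ, Sᴴ * S]))
  rw [Matrix.isUnit_iff_isUnit_det, det_identity, isUnit_iff_ne_zero] at h
  exact (not_congr h).trans (by simp)

end
end

section
/- A commuting tuple T = (T_1,…,T_n) of complex square matrices is normal if and only if the ideal ker(ψ_T) ⊆ ℂ[z,z̄] is not contained in I(a,b) for any a ≠ b in ℂⁿ, and not contained in J(a,U) for any a ∈ ℂⁿ and any nonzero positive semidefinite hermitian n×n matrix U. -/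
open MvPolynomial Complex Matrix MeasureTheory ComplexOrder

noncomputable section

universe u

/-! ### Helper lemmas -/

lemma aux_listProd {R : Type*} [Ring R] : ∀ {n : ℕ} (S : Fin n → R)
    (_ : ∀ i j, Commute (S i) (S j)) (e e' : Fin n → ℕ) (i : Fin n)
    (_ : ∀ j, e' j = e j + if i = j then 1 else 0),
    (List.ofFn fun j => S j ^ e' j).prod = (List.ofFn fun j => S j ^ e j).prod * S i := by
  intro n
  induction n with
  | zero => intro S hS e e' i; exact i.elim0
  | succ n ih =>
    intro S hS e e' i he
    rw [List.ofFn_succ, List.ofFn_succ, List.prod_cons, List.prod_cons]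
    refine Fin.cases ?_ (fun k => ?_) i (motive := fun i => (∀ j, e' j = e j + if i = j then 1 else 0) → S 0 ^ e' 0 * (List.ofFn fun j : Fin n => S j.succ ^ e' j.succ).prod = S 0 ^ e 0 * (List.ofFn fun j : Fin n => S j.succ ^ e j.succ).prod * S i) he
    · intro he
      have h0 : e' 0 = e 0 + 1 := by simpa using he 0
      have h1 : ∀ j : Fin n, e' j.succ = e j.succ := by
        intro j
        have := he j.succ
        rw [if_neg (Fin.succ_ne_zero j).symm] at this
        simpa using this
      simp only [h0, h1]
      have hc : Commute (S 0) ((List.ofFn fun j : Fin n => S j.succ ^ e j.succ).prod) := by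
        apply Commute.list_prod_right
        intro x hx
        rw [List.mem_ofFn] at hx
        obtain ⟨j, rfl⟩ := hx
        exact (hS _ _).pow_right _
      rw [pow_succ, mul_assoc, mul_assoc, hc.eq]
    · intro he
      have h0 : e' 0 = e 0 := by
        have := he 0
        rw [if_neg (Fin.succ_ne_zero k)] at this
        simpa using this
      rw [h0, ih (fun j => S j.succ) (fun i j => hS _ _) (fun j => e j.succ)
        (fun j => e' j.succ) k (fun j => by simpa using he j.succ), mul_assoc]

/-- The matrix `T^{*β} T^α` attached to a monomial. -/
def auxM {n m : ℕ} (T : Fin n → Matrix (Fin m) (Fin m) ℂ) (mo : Fin n ⊕ Fin n →₀ ℕ) :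
    Matrix (Fin m) (Fin m) ℂ :=
  (List.ofFn fun j => ((T j)ᴴ) ^ (mo (Sum.inr j))).prod *
     (List.ofFn fun j => (T j) ^ (mo (Sum.inl j))).prod

lemma psi_superset {n m : ℕ} (T : Fin n → Matrix (Fin m) (Fin m) ℂ) (f : CPoly n)
    (s : Finset (Fin n ⊕ Fin n →₀ ℕ)) (hs : f.support ⊆ s) :
    psiMat T f = ∑ mo ∈ s, f.coeff mo • auxM T mo := by
  unfold psiMat
  refine Finset.sum_subset hs ?_
  intro x _ hx
  rw [MvPolynomial.notMem_support_iff] at hx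
  rw [hx, zero_smul]

lemma psi_add {n m : ℕ} (T : Fin n → Matrix (Fin m) (Fin m) ℂ) (f g : CPoly n) :
    psiMat T (f + g) = psiMat T f + psiMat T g := by
  classical
  rw [psi_superset T (f + g) (f.support ∪ g.support) MvPolynomial.support_add,
    psi_superset T f (f.support ∪ g.support) Finset.subset_union_left,
    psi_superset T g (f.support ∪ g.support) Finset.subset_union_right,
    ← Finset.sum_add_distrib]
  refine Finset.sum_congr rfl fun x _ => ?_
  rw [MvPolynomial.coeff_add, add_smul]

lemma psi_monomial {n m : ℕ} (T : Fin n → Matrix (Fin m) (Fin m) ℂ)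
    (mo : Fin n ⊕ Fin n →₀ ℕ) (c : ℂ) :
    psiMat T (monomial mo c) = c • auxM T mo := by
  classical
  rw [psi_superset T _ {mo} MvPolynomial.support_monomial_subset]
  simp

lemma psi_C {n m : ℕ} (T : Fin n → Matrix (Fin m) (Fin m) ℂ) (c : ℂ) :
    psiMat T (C c) = c • 1 := by
  have := psi_monomial T 0 c
  simpa [auxM, List.ofFn_const] using this

lemma psi_mul_X {n m : ℕ} (T : Fin n → Matrix (Fin m) (Fin m) ℂ)
    (hT : ∀ i j, Commute (T i) (T j)) (f : CPoly n) (i : Fin n) :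
    psiMat T (f * X (Sum.inl i)) = psiMat T f * T i := by
  induction f using MvPolynomial.induction_on' with
  | monomial u a =>
    rw [MvPolynomial.X, MvPolynomial.monomial_mul, psi_monomial, psi_monomial, mul_one,
      smul_mul_assoc]
    congr 1
    unfold auxM
    rw [mul_assoc]
    congr 1
    · simp
    · refine aux_listProd T hT _ _ i ?_
      intro j
      simp [Finsupp.single_apply]
  | add p q hp hq => rw [add_mul, psi_add, psi_add, hp, hq, add_mul]

lemma psi_mul_Xbar {n m : ℕ} (T : Fin n → Matrix (Fin m) (Fin m) ℂ)
    (hT : ∀ i j, Commute (T i) (T j)) (f : CPoly n) (i : Fin n) :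
    psiMat T (f * X (Sum.inr i)) = (T i)ᴴ * psiMat T f := by
  have hS : ∀ i j, Commute ((T i)ᴴ) ((T j)ᴴ) := by
    intro i j
    have := (hT j i).eq
    show (T i)ᴴ * (T j)ᴴ = (T j)ᴴ * (T i)ᴴ
    rw [← Matrix.conjTranspose_mul, ← Matrix.conjTranspose_mul, this]
  induction f using MvPolynomial.induction_on' with
  | monomial u a =>
    rw [MvPolynomial.X, MvPolynomial.monomial_mul, psi_monomial, psi_monomial, mul_one,
      mul_smul_comm]
    congr 1
    unfold auxM
    rw [← mul_assoc]
    congr 1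
    · have hc : Commute ((T i)ᴴ) ((List.ofFn fun j => ((T j)ᴴ) ^ (u (Sum.inr j))).prod) := by
        apply Commute.list_prod_right
        intro x hx
        rw [List.mem_ofFn] at hx
        obtain ⟨j, rfl⟩ := hx
        exact (hS _ _).pow_right _
      rw [hc.eq]
      refine aux_listProd (fun j => (T j)ᴴ) hS _ _ i ?_
      intro j
      simp [Finsupp.single_apply]
    · simp
  | add p q hp hq => rw [add_mul, psi_add, psi_add, hp, hq, mul_add]

/-- The sesquilinear form attached to `ψ_T(f)`. -/
def auxL {n m : ℕ} (T : Fin n → Matrix (Fin m) (Fin m) ℂ) (x y : Fin m → ℂ) (f : CPoly n) : ℂ :=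
  star y ⬝ᵥ (psiMat T f *ᵥ x)

lemma auxL_X {n m : ℕ} (T : Fin n → Matrix (Fin m) (Fin m) ℂ)
    (hT : ∀ i j, Commute (T i) (T j)) (f : CPoly n) (i : Fin n) (a : ℂ) (x y : Fin m → ℂ) :
    auxL T x y (f * X (Sum.inl i)) = a * auxL T x y f + auxL T ((T i) *ᵥ x - a • x) y f := by
  unfold auxL
  rw [psi_mul_X T hT, Matrix.mulVec_sub, Matrix.mulVec_smul, dotProduct_sub, dotProduct_smul,
    Matrix.mulVec_mulVec, smul_eq_mul]
  ring

lemma auxL_Xbar {n m : ℕ} (T : Fin n → Matrix (Fin m) (Fin m) ℂ)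
    (hT : ∀ i j, Commute (T i) (T j)) (f : CPoly n) (i : Fin n) (b : ℂ) (x y : Fin m → ℂ) :
    auxL T x y (f * X (Sum.inr i)) =
      (starRingEnd ℂ) b * auxL T x y f + auxL T x ((T i) *ᵥ y - b • y) f := by
  unfold auxL
  rw [psi_mul_Xbar T hT, star_sub, star_smul, sub_dotProduct, smul_dotProduct,
    ← Matrix.mulVec_mulVec, Matrix.star_mulVec, Matrix.dotProduct_mulVec (star y) ((T i)ᴴ),
    smul_eq_mul]
  simp

/-- The second order Taylor expansion. -/
def auxR {n m : ℕ} (T : Fin n → Matrix (Fin m) (Fin m) ℂ) (a b : Fin n → ℂ)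
    (x y : Fin m → ℂ) (f : CPoly n) : ℂ :=
  evalPair a (fun j => (starRingEnd ℂ) (b j)) f * (star y ⬝ᵥ x)
  + ∑ j, evalPair a (fun j => (starRingEnd ℂ) (b j)) (pderiv (Sum.inl j) f)
      * (star y ⬝ᵥ (T j *ᵥ x - a j • x))
  + ∑ k, evalPair a (fun j => (starRingEnd ℂ) (b j)) (pderiv (Sum.inr k) f)
      * (star (T k *ᵥ y - b k • y) ⬝ᵥ x)
  + ∑ j, ∑ k, evalPair a (fun j => (starRingEnd ℂ) (b j))
      (pderiv (Sum.inr k) (pderiv (Sum.inl j) f))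
      * (star (T k *ᵥ y - b k • y) ⬝ᵥ (T j *ᵥ x - a j • x))

/-- `x` is killed by all products `(T_i - a_i)(T_j - a_j)`. -/
def auxK {n m : ℕ} (T : Fin n → Matrix (Fin m) (Fin m) ℂ) (a : Fin n → ℂ) (x : Fin m → ℂ) : Prop :=
  ∀ i j, T i *ᵥ (T j *ᵥ x - a j • x) - a i • (T j *ᵥ x - a j • x) = 0

lemma taylor {n m : ℕ} (T : Fin n → Matrix (Fin m) (Fin m) ℂ)
    (hT : ∀ i j, Commute (T i) (T j)) (a b : Fin n → ℂ) (f : CPoly n) :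
    ∀ x y : Fin m → ℂ, auxK T a x → auxK T b y → auxL T x y f = auxR T a b x y f := by
  have hK : ∀ (a : Fin n → ℂ) (x : Fin m → ℂ), auxK T a x → ∀ i, auxK T a (T i *ᵥ x - a i • x) := by
    intro a x hx i k l
    rw [hx l i]; simp
  induction f using MvPolynomial.induction_on with
  | C c =>
    intro x y hx hy
    simp [auxL, auxR, psi_C, evalPair, Matrix.smul_mulVec]
  | add p q hp hq =>
    intro x y hx hy
    have h1 : auxL T x y (p + q) = auxL T x y p + auxL T x y q := by
      simp [auxL, psi_add, Matrix.add_mulVec]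
    rw [h1, hp x y hx hy, hq x y hx hy]
    simp only [auxR, evalPair, map_add, add_mul, Finset.sum_add_distrib]
    ring
  | mul_X p i hp =>
    intro x y hx hy
    rcases i with i | i
    · rw [auxL_X T hT p i (a i), hp x y hx hy, hp _ y (hK a x hx i) hy]
      unfold auxR
      simp only [hx _ i, dotProduct_zero, mul_zero, Finset.sum_const_zero, add_zero]
      simp only [evalPair, Derivation.leibniz, smul_eq_mul, map_add, map_mul, eval_X,
        Sum.elim_inl, pderiv_X, Pi.single_apply, add_mul, Finset.sum_add_distrib]
      simp [apply_ite, ite_mul, Finset.mul_sum, mul_add, mul_assoc]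
      ring
    · rw [auxL_Xbar T hT p i (b i), hp x y hx hy, hp x _ hx (hK b y hy i)]
      unfold auxR
      simp only [hy _ i, star_zero, zero_dotProduct, mul_zero, Finset.sum_const_zero, add_zero]
      simp only [evalPair, Derivation.leibniz, smul_eq_mul, map_add, map_mul, eval_X,
        Sum.elim_inr, pderiv_X, Pi.single_apply, add_mul, Finset.sum_add_distrib]
      simp [apply_ite, ite_mul, Finset.mul_sum, mul_add, mul_assoc]
      ring

open scoped Matrix.Norms.L2Operator in
lemma normal_poly {m : ℕ} (A : Matrix (Fin m) (Fin m) ℂ) (hA : Commute A Aᴴ) :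
    ∃ p : Polynomial ℂ, Aᴴ = Polynomial.aeval A p := by
  classical
  have hn : IsStarNormal A := ⟨hA.symm⟩
  let s : Finset ℂ := (Matrix.finite_spectrum A (R := ℂ)).toFinset
  refine ⟨Lagrange.interpolate s id (fun z => star z), ?_⟩
  rw [← cfc_polynomial _ A, ← Matrix.star_eq_conjTranspose, ← cfc_star_id (R := ℂ) (a := A)]
  refine cfc_congr fun z hz => ?_
  have := Lagrange.eval_interpolate_at_node (s := s) (v := id) (i := z) (fun z => star z)
    (Function.injective_id.injOn) (by simpa [s] using hz)
  simpa using this.symm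

lemma forward_aux {n m : ℕ} (T : Fin n → Matrix (Fin m) (Fin m) ℂ)
    (hT : ∀ i j, Commute (T i) (T j)) (j : Fin n) (p : Polynomial ℂ)
    (hp : (T j)ᴴ = Polynomial.aeval (T j) p) :
    psiMat T (X (Sum.inr j) - Polynomial.aeval (X (Sum.inl j)) p : CPoly n) = 0 := by
  have h1 : ∀ p : Polynomial ℂ, psiMat T (Polynomial.aeval (X (Sum.inl j) : CPoly n) p)
      = Polynomial.aeval (T j) p := by
    intro p
    induction p using Polynomial.induction_on with
    | C c =>
      rw [Polynomial.aeval_C, Polynomial.aeval_C, MvPolynomial.algebraMap_eq, psi_C,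
        Algebra.algebraMap_eq_smul_one]
    | add p q hp hq => rw [map_add, psi_add, hp, hq, map_add]
    | monomial k c h =>
      rw [pow_succ, ← mul_assoc, map_mul, Polynomial.aeval_X, psi_mul_X T hT, h, map_mul _ (_ * _),
        Polynomial.aeval_X]
  have h2 : psiMat T (X (Sum.inr j)) = (T j)ᴴ := by
    have := psi_mul_Xbar T hT (C 1) j
    rw [psi_C] at this
    simpa using this
  have h3 := psi_add T (X (Sum.inr j) - Polynomial.aeval (X (Sum.inl j)) p : CPoly n)
    (Polynomial.aeval (X (Sum.inl j)) p)
  rw [sub_add_cancel, h1, h2, hp] at h3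
  simpa using h3

lemma eval_paeval {n : ℕ} (a b : Fin n → ℂ) (j : Fin n) (p : Polynomial ℂ) :
    evalPair a b (X (Sum.inr j) - Polynomial.aeval (X (Sum.inl j)) p) = b j - p.eval (a j) := by
  unfold evalPair
  rw [map_sub, eval_X, Sum.elim_inr]
  congr 1
  induction p using Polynomial.induction_on with
  | C c => simp [MvPolynomial.algebraMap_eq]
  | add p q hp hq => rw [map_add, map_add, hp, hq, Polynomial.eval_add]
  | monomial k c h => simp [MvPolynomial.algebraMap_eq]

lemma pderiv_paeval {n : ℕ} (j k : Fin n) (p : Polynomial ℂ) :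
    pderiv (Sum.inr k) (X (Sum.inr j) - Polynomial.aeval (X (Sum.inl j)) p : CPoly n)
      = if j = k then 1 else 0 := by
  have : pderiv (Sum.inr k) (Polynomial.aeval (X (Sum.inl j)) p : CPoly n) = 0 := by
    induction p using Polynomial.induction_on with
    | C c => simp [MvPolynomial.algebraMap_eq]
    | add p q hp hq => rw [map_add, map_add, hp, hq, add_zero]
    | monomial k c h => simp [MvPolynomial.algebraMap_eq, Derivation.leibniz_pow, pderiv_X]
  rw [map_sub, this, sub_zero, pderiv_X, Pi.single_apply]
  simp

lemma backward_I {n m : ℕ} (T : Fin n → Matrix (Fin m) (Fin m) ℂ)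
    (hT : ∀ i j, Commute (T i) (T j)) (a b : Fin n → ℂ) (u v : Fin m → ℂ)
    (hu : ∀ j, T j *ᵥ u = a j • u) (hv : ∀ j, T j *ᵥ v = b j • v) (huv : star u ⬝ᵥ v ≠ 0) :
    {f : CPoly n | psiMat T f = 0} ⊆ Iab a b := by
  have key : ∀ (a b : Fin n → ℂ) (x y : Fin m → ℂ) (f : CPoly n), psiMat T f = 0 →
      (∀ j, T j *ᵥ x = a j • x) → (∀ j, T j *ᵥ y = b j • y) → star y ⬝ᵥ x ≠ 0 →
      evalPair a (fun j => (starRingEnd ℂ) (b j)) f = 0 := by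
    intro a b x y f hf hx hy hxy
    have h := taylor T hT a b f x y (fun i j => by simp [hx]) (fun i j => by simp [hy])
    simp only [auxL, auxR, hf, hx, hy] at h
    simp at h
    exact h.resolve_right hxy
  have hu0 : star u ⬝ᵥ u ≠ 0 := by
    intro h
    rw [dotProduct_star_self_eq_zero] at h
    exact huv (by simp [h])
  have hv0 : star v ⬝ᵥ v ≠ 0 := by
    intro h
    rw [dotProduct_star_self_eq_zero] at h
    exact huv (by simp [h])
  have hvu : star v ⬝ᵥ u ≠ 0 := by
    intro h
    apply huv
    have := congrArg star h
    rw [← star_dotProduct_star, star_star, star_zero] at this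
    exact this
  intro f hf
  exact ⟨key a a u u f hf hu hu hu0, key a b u v f hf hu hv hvu, key b a v u f hf hv hu huv,
    key b b v v f hf hv hv hv0⟩

lemma backward_J {n m : ℕ} (T : Fin n → Matrix (Fin m) (Fin m) ℂ)
    (hT : ∀ i j, Commute (T i) (T j)) (a : Fin n → ℂ) (w : Fin m → ℂ)
    (hw : auxK T a w) (l : Fin n) (hl : T l *ᵥ w - a l • w ≠ 0) :
    ∃ U : Matrix (Fin n) (Fin n) ℂ, U.PosSemidef ∧ U ≠ 0 ∧
      {f : CPoly n | psiMat T f = 0} ⊆ Jau a U := by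
  set e : Fin n → Fin m → ℂ := fun j => T j *ᵥ w - a j • w with he
  let M : Matrix (Fin m) (Fin n) ℂ := Matrix.of fun i j => e j i
  have hU : ∀ k j, (Mᴴ * M) k j = star (e k) ⬝ᵥ e j := fun k j => rfl
  have hMv : ∀ g : Fin n → ℂ, M *ᵥ g = ∑ j, g j • e j := by
    intro g
    ext i
    simp [Matrix.mulVec, dotProduct, M, mul_comm]
  refine ⟨Mᴴ * M, Matrix.posSemidef_conjTranspose_mul_self M, ?_, ?_⟩
  · intro h
    have h2 := hU l l
    rw [h, Matrix.zero_apply, eq_comm, dotProduct_star_self_eq_zero] at h2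
    exact hl h2
  intro f hf
  have hf' : psiMat T f = 0 := hf
  have heK : ∀ i, auxK T a (e i) := by
    intro i k j
    have h0 := hw j i
    simp only [he]
    rw [h0]; simp
  have hee : ∀ i j, T j *ᵥ e i - a j • e i = 0 := fun i j => hw j i
  have hL : ∀ x y, auxL T x y f = 0 := by intro x y; simp [auxL, hf']
  -- order 0
  have h00 : evalAt a f = 0 := by
    have h := taylor T hT a a f (e l) (e l) (heK l) (heK l)
    rw [hL] at h
    simp only [auxR, hee] at h
    simp at h
    exact h.resolve_right hl
  have h00' : evalPair a (fun j => (starRingEnd ℂ) (a j)) f = 0 := h00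
  -- first order, holomorphic
  have h10 : (Mᴴ * M) *ᵥ (fun k => evalAt a (pderiv (Sum.inl k) f)) = 0 := by
    ext k
    have h := taylor T hT a a f w (e k) hw (heK k)
    rw [hL] at h
    simp only [auxR, hee, h00'] at h
    simp only [dotProduct_zero, mul_zero, Finset.sum_const_zero, star_zero, zero_dotProduct,
      zero_mul, zero_add, add_zero] at h
    rw [Matrix.mulVec, dotProduct, Pi.zero_apply]
    simp only [hU]
    rw [h]
    exact Finset.sum_congr rfl fun j _ => mul_comm _ _
  have h01 : ((Mᴴ * M).map (starRingEnd ℂ)) *ᵥ (fun k => evalAt a (pderiv (Sum.inr k) f)) = 0 := by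
    ext k
    have h := taylor T hT a a f (e k) w (heK k) hw
    rw [hL] at h
    simp only [auxR, hee, h00'] at h
    simp only [dotProduct_zero, mul_zero, Finset.sum_const_zero, star_zero, zero_dotProduct,
      zero_mul, zero_add, add_zero] at h
    have hc : ∀ j, (starRingEnd ℂ) (star (e k) ⬝ᵥ e j) = star (e j) ⬝ᵥ e k := by
      intro j
      rw [starRingEnd_apply, ← star_dotProduct_star, star_star]
    rw [Matrix.mulVec, dotProduct, Pi.zero_apply]
    simp only [Matrix.map_apply, hU, hc]
    rw [h]
    exact Finset.sum_congr rfl fun j _ => mul_comm _ _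
  refine ⟨h00, h10, h01, ?_⟩
  have g10 : ∑ j, evalAt a (pderiv (Sum.inl j) f) • e j = 0 := by
    rw [← hMv]
    rwa [Matrix.conjTranspose_mul_self_mulVec_eq_zero] at h10
  have g01 : ∑ j, star (evalAt a (pderiv (Sum.inr j) f)) • e j = 0 := by
    rw [← hMv, ← Matrix.conjTranspose_mul_self_mulVec_eq_zero]
    ext k
    have := congrArg star (congrFun h01 k)
    simpa only [Matrix.mulVec, dotProduct, Matrix.map_apply, Pi.zero_apply, star_sum, star_mul',
      starRingEnd_apply, star_star, star_zero] using this
  have h := taylor T hT a a f w w hw hw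
  rw [hL] at h
  have k10 : ∑ j, evalAt a (pderiv (Sum.inl j) f) * (star w ⬝ᵥ e j) = 0 := by
    have := congrArg (fun x => star w ⬝ᵥ x) g10
    simpa [dotProduct_sum] using this
  have k01 : ∑ j, evalAt a (pderiv (Sum.inr j) f) * (star (e j) ⬝ᵥ w) = 0 := by
    have := congrArg (fun x => star x ⬝ᵥ w) g01
    simpa [sum_dotProduct] using this
  have h' : ∑ j, ∑ k, evalAt a (pderiv (Sum.inr k) (pderiv (Sum.inl j) f))
      * (star (e k) ⬝ᵥ e j) = 0 := by
    have h2 : (0 : ℂ) = evalAt a f * (star w ⬝ᵥ w)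
      + ∑ j, evalAt a (pderiv (Sum.inl j) f) * (star w ⬝ᵥ e j)
      + ∑ j, evalAt a (pderiv (Sum.inr j) f) * (star (e j) ⬝ᵥ w)
      + ∑ j, ∑ k, evalAt a (pderiv (Sum.inr k) (pderiv (Sum.inl j) f))
      * (star (e k) ⬝ᵥ e j) := h
    rw [h00, k10, k01] at h2
    simpa using h2.symm
  rw [Matrix.trace]
  simp only [Matrix.diag_apply]
  simp_rw [Matrix.mul_apply (M := Mᴴ * M), hU]
  rw [Finset.sum_comm, ← h']
  exact Finset.sum_congr rfl fun j _ => Finset.sum_congr rfl fun k _ => mul_comm _ _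

lemma span_aux {n m : ℕ} (T : Fin n → Matrix (Fin m) (Fin m) ℂ)
    (hT : ∀ i j, Commute (T i) (T j))
    (hA : ∀ (a : Fin n → ℂ) (w : Fin m → ℂ), auxK T a w → ∀ l, T l *ᵥ w - a l • w = 0) :
    Submodule.span ℂ {x : Fin m → ℂ | ∃ a : Fin n → ℂ, ∀ j, T j *ᵥ x = a j • x} = ⊤ := by
  rw [eq_top_iff]
  have h := Module.End.iSup_iInf_maxGenEigenspace_eq_top_of_iSup_maxGenEigenspace_eq_top_of_commute
    (fun j => Matrix.toLin' (T j)) (fun i j _ => by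
      show _ * _ = _ * _
      rw [Module.End.mul_eq_comp, Module.End.mul_eq_comp, ← Matrix.toLin'_mul, ← Matrix.toLin'_mul, (hT i j).eq])
    (fun i => Module.End.iSup_maxGenEigenspace_eq_top _)
  rw [← h]
  refine iSup_le fun a => ?_
  intro x hx
  apply Submodule.subset_span
  refine ⟨a, ?_⟩
  let N : Fin n → Module.End ℂ (Fin m → ℂ) :=
    fun j => Matrix.toLin' (T j) - algebraMap ℂ _ (a j)
  have hN : ∀ j x, N j x = T j *ᵥ x - a j • x := by
    intro j x
    simp [N]
  have hNc : ∀ i j, Commute (N i) (N j) := by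
    intro i j
    have h1 : Commute (Matrix.toLin' (T i)) (Matrix.toLin' (T j)) := by
      show _ * _ = _ * _
      rw [Module.End.mul_eq_comp, Module.End.mul_eq_comp, ← Matrix.toLin'_mul, ← Matrix.toLin'_mul, (hT i j).eq]
    exact (h1.sub_left (Algebra.commutes _ _)).sub_right
      ((Algebra.commutes (a j) _).symm)
  have key : ∀ (D : ℕ) (d : Fin n → ℕ), ∑ j, d j = D → ∀ x : Fin m → ℂ,
      (∀ j, (N j ^ d j) x = 0) → ∀ j, N j x = 0 := by
    intro D
    induction D with
    | zero =>
      intro d hd x hx j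
      have : d j = 0 := by
        rw [Finset.sum_eq_zero_iff] at hd
        exact hd j (Finset.mem_univ j)
      have h2 := hx j
      rw [this] at h2
      simp at h2
      simp [h2]
    | succ D ih =>
      intro d hd x hx
      have hall : ∀ i j, N i (N j x) = 0 := by
        intro i j
        rcases Nat.eq_zero_or_pos (d j) with h0 | h0
        · have h2 := hx j
          rw [h0] at h2
          simp at h2
          simp [h2]
        · refine ih (Function.update d j (d j - 1)) ?_ (N j x) ?_ i
          · have h3 := Finset.sum_update_of_mem (Finset.mem_univ j) d (d j - 1)
            have h4 := Finset.add_sum_erase Finset.univ d (Finset.mem_univ j)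
            rw [h3, Finset.sdiff_singleton_eq_erase]
            omega
          · intro k
            by_cases hk : k = j
            · subst hk
              rw [Function.update_self, ← Module.End.mul_apply, ← pow_succ,
                Nat.sub_add_cancel h0]
              exact hx k
            · rw [Function.update_of_ne hk, ← Module.End.mul_apply,
                ((hNc k j).pow_left (d k)).eq, Module.End.mul_apply, hx k, map_zero]
      intro j
      rw [hN]
      refine hA a x ?_ j
      intro i j
      have := hall i j
      rwa [hN, hN] at this
  rw [Module.End.mem_iInf_maxGenEigenspace_iff] at hx
  choose d hd using hx
  intro j
  have := key _ d rfl x (fun j => hd j) j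
  rw [hN] at this
  exact sub_eq_zero.mp this

theorem statement5 (n : ℕ) (hn : 0 < n) (m : ℕ) (T : Fin n → Matrix (Fin m) (Fin m) ℂ)
    (hT : ∀ i j, Commute (T i) (T j)) :
    (∀ j, Commute (T j) ((T j)ᴴ)) ↔
    ((∀ a b : Fin n → ℂ, a ≠ b → ¬({f : CPoly n | psiMat T f = 0} ⊆ Iab a b)) ∧
      ∀ (a : Fin n → ℂ) (U : Matrix (Fin n) (Fin n) ℂ), U.PosSemidef → U ≠ 0 →
        ¬({f : CPoly n | psiMat T f = 0} ⊆ Jau a U)) := by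
  constructor
  · intro hnorm
    have hp : ∀ j, ∃ p : Polynomial ℂ, (T j)ᴴ = Polynomial.aeval (T j) p :=
      fun j => normal_poly _ (hnorm j)
    choose p hp using hp
    refine ⟨fun a b hab hsub => hab ?_, fun a U _ hU hsub => hU ?_⟩
    · funext j
      obtain ⟨h1, h2, -, -⟩ := hsub (forward_aux T hT j (p j) (hp j))
      rw [eval_paeval, sub_eq_zero] at h1 h2
      exact (starRingEnd ℂ).injective (h1.trans h2.symm)
    · ext i j
      obtain ⟨-, -, h3, -⟩ := hsub (forward_aux T hT j (p j) (hp j))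
      have h4 := congrFun h3 i
      simp only [pderiv_paeval] at h4
      simpa [Matrix.mulVec, dotProduct, evalAt, evalPair, apply_ite] using h4
  · rintro ⟨hI, hJ⟩
    have hA : ∀ (a : Fin n → ℂ) (w : Fin m → ℂ), auxK T a w → ∀ l, T l *ᵥ w - a l • w = 0 := by
      intro a w hw l
      by_contra hl
      obtain ⟨U, h1, h2, h3⟩ := backward_J T hT a w hw l hl
      exact hJ a U h1 h2 h3
    have hB : ∀ (a b : Fin n → ℂ) (u v : Fin m → ℂ), a ≠ b → (∀ j, T j *ᵥ u = a j • u) →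
        (∀ j, T j *ᵥ v = b j • v) → star u ⬝ᵥ v = 0 := by
      intro a b u v hab hu hv
      by_contra huv
      exact hI a b hab (backward_I T hT a b u v hu hv huv)
    have hspan := span_aux T hT hA
    have hadj : ∀ (a : Fin n → ℂ) (v : Fin m → ℂ), (∀ j, T j *ᵥ v = a j • v) → ∀ j,
        (T j)ᴴ *ᵥ v = star (a j) • v := by
      intro a v hv j
      rw [← sub_eq_zero]
      set y := (T j)ᴴ *ᵥ v - star (a j) • v with hy
      have hall : ∀ x : Fin m → ℂ, star y ⬝ᵥ x = 0 := by
        intro x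
        have hx : x ∈ Submodule.span ℂ
            {x : Fin m → ℂ | ∃ a : Fin n → ℂ, ∀ j, T j *ᵥ x = a j • x} := by
          rw [hspan]; trivial
        induction hx using Submodule.span_induction with
        | mem x hx =>
          obtain ⟨b, hb⟩ := hx
          rw [hy, star_sub, star_smul, star_star, sub_dotProduct, Matrix.star_mulVec,
            Matrix.conjTranspose_conjTranspose, ← Matrix.dotProduct_mulVec, hb j,
            dotProduct_smul, smul_dotProduct]
          by_cases hab : a = b
          · rw [hab, sub_self]
          · rw [hB a b v x hab hv hb]; simp
        | zero => simp
        | add x z _ _ h1 h2 => rw [dotProduct_add, h1, h2, add_zero]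
        | smul c x _ h1 => rw [dotProduct_smul, h1, smul_zero]
      exact dotProduct_star_self_eq_zero.mp (hall y)
    intro j
    show T j * (T j)ᴴ = (T j)ᴴ * T j
    apply Matrix.toLin'.injective
    refine LinearMap.ext_on hspan ?_
    rintro x ⟨a, ha⟩
    rw [Matrix.toLin'_apply, Matrix.toLin'_apply, ← Matrix.mulVec_mulVec, ← Matrix.mulVec_mulVec,
      hadj a x ha, ha, Matrix.mulVec_smul, Matrix.mulVec_smul, hadj a x ha, ha, smul_comm]

end
end

section
/- Let I ⊆ ℝ[x,y] be an ideal, and assume that (viewing ℝ[x,y] ⊆ ℂ[z,z̄]) I ⊆ I(a,b) for some a ≠ b in ℂⁿ, or I ⊆ J(a,U) for some a ∈ ℂⁿ and some nonzero positive semidefinite hermitian n×n matrix U. Then there exists f ∈ ℝ[x,y] such that f > 0 at every point of V_ℝ(I), but f ∉ Σ_h + I, i.e., f is not a sum of hermitian squares modulo I. -/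
open MvPolynomial Complex Matrix MeasureTheory ComplexOrder

noncomputable section

universe u

theorem hermStar_X_inl (n : ℕ) (j : Fin n) :
    hermStar n (X (Sum.inl j)) = X (Sum.inr j) := by
  simp [hermStar]

theorem hermStar_X_inr (n : ℕ) (j : Fin n) :
    hermStar n (X (Sum.inr j)) = X (Sum.inl j) := by
  simp [hermStar]

theorem hermStar_C (n : ℕ) (c : ℂ) :
    hermStar n (C c) = C ((starRingEnd ℂ) c) := by
  simp [hermStar]

theorem hermStar_invol (n : ℕ) (f : CPoly n) : hermStar n (hermStar n f) = f := by
  induction f using MvPolynomial.induction_on with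
  | C c => simp [hermStar_C]
  | add p q hp hq => simp [hp, hq]
  | mul_X p i hp =>
    rcases i with i | i <;> simp [hp, hermStar_X_inl, hermStar_X_inr]

theorem evalPair_hermStar {n : ℕ} (a b : Fin n → ℂ) (f : CPoly n) :
    evalPair a (fun j => (starRingEnd ℂ) (b j)) (hermStar n f) =
      (starRingEnd ℂ) (evalPair b (fun j => (starRingEnd ℂ) (a j)) f) := by
  unfold evalPair
  induction f using MvPolynomial.induction_on with
  | C c => simp [hermStar_C]
  | add p q hp hq => simp [hp, hq]
  | mul_X p i hp =>
    rcases i with i | i <;> simp [hp, hermStar_X_inl, hermStar_X_inr]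

theorem evalAt_hermStar {n : ℕ} (a : Fin n → ℂ) (f : CPoly n) :
    evalAt a (hermStar n f) = (starRingEnd ℂ) (evalAt a f) :=
  evalPair_hermStar a a f

theorem evalPair_hol {n : ℕ} (a b : Fin n → ℂ) (p : MvPolynomial (Fin n) ℂ) :
    evalPair a b (hol n p) = MvPolynomial.eval a p := by
  unfold evalPair hol
  rw [MvPolynomial.eval_rename]
  simp

theorem pderiv_hermStar {n : ℕ} (k : Fin n) (f : CPoly n) :
    pderiv (Sum.inr k) (hermStar n f) = hermStar n (pderiv (Sum.inl k) f) := by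
  induction f using MvPolynomial.induction_on with
  | C c => simp [hermStar_C]
  | add p q hp hq => simp [hp, hq]
  | mul_X p i hp =>
    rcases i with i | i
    · by_cases h : i = k
      · subst h
        simp [hp, hermStar_X_inl, pderiv_mul]
      · simp [hp, hermStar_X_inl, pderiv_mul, pderiv_X, Pi.single_apply, h, Ne.symm h]
    · simp [hp, hermStar_X_inr, pderiv_mul, pderiv_X, Pi.single_apply]

theorem pderiv_inr_hol {n : ℕ} (k : Fin n) (p : MvPolynomial (Fin n) ℂ) :
    pderiv (Sum.inr k) (hol n p) = 0 := by
  induction p using MvPolynomial.induction_on with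
  | C c => simp [hol]
  | add p q hp hq => simp [hp, hq]
  | mul_X p i hp =>
    rw [map_mul, pderiv_mul, hp]
    simp [hol, pderiv_X, Pi.single_apply]

theorem pderiv_inl_hol {n : ℕ} (k : Fin n) (p : MvPolynomial (Fin n) ℂ) :
    pderiv (Sum.inl k) (hol n p) = hol n (pderiv k p) := by
  unfold hol
  exact pderiv_rename Sum.inl_injective _ _

theorem pderiv_inl_hermStar_hol {n : ℕ} (k : Fin n) (p : MvPolynomial (Fin n) ℂ) :
    pderiv (Sum.inl k) (hermStar n (hol n p)) = 0 := by
  have h := pderiv_hermStar k (hermStar n (hol n p))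
  rw [hermStar_invol, pderiv_inr_hol] at h
  have h2 := congrArg (hermStar n) h
  rw [hermStar_invol] at h2
  simpa using h2.symm

theorem evalAt_add {n : ℕ} (a : Fin n → ℂ) (f g : CPoly n) :
    evalAt a (f + g) = evalAt a f + evalAt a g := by simp [evalAt, evalPair]

theorem evalAt_mul {n : ℕ} (a : Fin n → ℂ) (f g : CPoly n) :
    evalAt a (f * g) = evalAt a f * evalAt a g := by simp [evalAt, evalPair]

theorem evalAt_C {n : ℕ} (a : Fin n → ℂ) (c : ℂ) :
    evalAt a (C c : CPoly n) = c := by simp [evalAt, evalPair]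

theorem evalAt_zero {n : ℕ} (a : Fin n → ℂ) :
    evalAt a (0 : CPoly n) = 0 := by simp [evalAt, evalPair]

/-- A functional nonnegative on hermitian squares and vanishing on `I`, negative at `f`,
excludes `f` from `Σ_h + I`. -/
theorem not_mem_of_functional {n : ℕ} {I : Set (CPoly n)} (φ : CPoly n →+ ℂ)
    (h1 : ∀ p : MvPolynomial (Fin n) ℂ, 0 ≤ (φ (hol n p * hermStar n (hol n p))).re)
    (h2 : ∀ g ∈ I, φ g = 0) (f : CPoly n) (h3 : (φ f).re < 0) :
    f ∉ SigmaHPlus n I := by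
  rintro ⟨s, ⟨k, p, rfl⟩, g, hg, rfl⟩
  rw [map_add, h2 g hg, add_zero, map_sum, Complex.re_sum] at h3
  exact absurd h3 (not_lt.mpr (Finset.sum_nonneg fun i _ => h1 (p i)))

theorem case_ab {n : ℕ} {I : Set (CPoly n)} (a b : Fin n → ℂ) (hab : a ≠ b)
    (hI : I ⊆ Iab a b) :
    ∃ f : CPoly n, hermStar n f = f ∧ (∀ a ∈ VR n I, 0 < (evalAt a f).re) ∧
      f ∉ SigmaHPlus n I := by
  obtain ⟨j, hj⟩ := Function.ne_iff.mp hab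
  set d : ℂ := a j - b j with hd
  have hd0 : d ≠ 0 := sub_ne_zero.mpr hj
  set r : ℝ := Complex.normSq d with hr
  have hr0 : 0 < r := Complex.normSq_pos.mpr hd0
  have hdr : (starRingEnd ℂ) d * d = (r : ℂ) := by rw [hr, mul_comm, Complex.mul_conj]
  let L : CPoly n := C ((starRingEnd ℂ) d) * (X (Sum.inl j) - C (b j))
  let f : CPoly n := C (((r ^ 2 / 4 : ℝ)) : ℂ) - (L - hermStar n L) * (L - hermStar n L)
  let φ : CPoly n →+ ℂ :=
    { toFun := fun f => evalPair a (fun j => (starRingEnd ℂ) (a j)) f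
        + evalPair a (fun j => (starRingEnd ℂ) (b j)) f
        + evalPair b (fun j => (starRingEnd ℂ) (a j)) f
        + evalPair b (fun j => (starRingEnd ℂ) (b j)) f
      map_zero' := by simp [evalPair]
      map_add' := by intro f g; simp only [evalPair, map_add]; ring }
  refine ⟨f, ?_, ?_, not_mem_of_functional φ ?_ ?_ f ?_⟩
  · simp only [f, map_sub, map_mul, hermStar_invol, hermStar_C, Complex.conj_ofReal]
    ring
  · intro x _
    have : evalAt x f = (((r ^ 2 / 4 : ℝ)) : ℂ)
        - (evalAt x L - evalAt x (hermStar n L)) * (evalAt x L - evalAt x (hermStar n L)) := by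
      simp [f, evalAt, evalPair]
    rw [this, evalAt_hermStar]
    simp only [Complex.sub_re, Complex.mul_re, Complex.sub_im, Complex.conj_re, Complex.conj_im,
      Complex.ofReal_re]
    nlinarith [sq_nonneg (evalAt x L).im, sq_pos_of_pos hr0]
  · intro p
    have : φ (hol n p * hermStar n (hol n p)) =
        (MvPolynomial.eval a p + MvPolynomial.eval b p) *
          (starRingEnd ℂ) (MvPolynomial.eval a p + MvPolynomial.eval b p) := by
      have hm : ∀ x y : Fin n → ℂ, evalPair x (fun j => (starRingEnd ℂ) (y j))
          (hol n p * hermStar n (hol n p)) =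
            MvPolynomial.eval x p * (starRingEnd ℂ) (MvPolynomial.eval y p) := by
        intro x y
        rw [← evalPair_hol y (fun j => (starRingEnd ℂ) (x j)) p, ← evalPair_hermStar,
          ← evalPair_hol x (fun j => (starRingEnd ℂ) (y j)) p]
        simp [evalPair]
      simp only [φ, AddMonoidHom.coe_mk, ZeroHom.coe_mk, hm, map_add]
      ring
    rw [this, Complex.mul_conj, Complex.ofReal_re]
    exact Complex.normSq_nonneg _
  · intro g hg
    obtain ⟨h1, h2, h3, h4⟩ := hI hg
    simp [φ, h1, h2, h3, h4]
  · have hdr' : (starRingEnd ℂ) d * (a j - b j) = (r : ℂ) := hdr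
    have hL : ∀ x y : Fin n → ℂ, evalPair x (fun j => (starRingEnd ℂ) (y j)) f
        = (((r ^ 2 / 4 : ℝ)) : ℂ) - ((starRingEnd ℂ) d * (x j - b j)
          - (starRingEnd ℂ) ((starRingEnd ℂ) d * (y j - b j))) ^ 2 := by
      intro x y
      simp [f, L, evalPair, hermStar_C, hermStar_X_inl]
      ring
    have : φ f = ((-(r ^ 2) : ℝ) : ℂ) := by
      simp only [φ, AddMonoidHom.coe_mk, ZeroHom.coe_mk, hL, hdr', sub_self, mul_zero, map_zero,
        Complex.conj_ofReal]
      push_cast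
      ring
    rw [this, Complex.ofReal_re]
    nlinarith [sq_pos_of_pos hr0]

/-- The functional attached to `J(a,U)` and a direction `v`. -/
def phiJ {n : ℕ} (a : Fin n → ℂ) (U : Matrix (Fin n) (Fin n) ℂ) (v : Fin n → ℂ) :
    CPoly n →+ ℂ where
  toFun f := ∑ k, ∑ j, U k j *
    (evalAt a (pderiv (Sum.inr k) (pderiv (Sum.inl j) f))
      + (starRingEnd ℂ) (v k) * evalAt a (pderiv (Sum.inl j) f)
      + v j * evalAt a (pderiv (Sum.inr k) f)
      + (starRingEnd ℂ) (v k) * v j * evalAt a f)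
  map_zero' := by simp [evalAt_zero]
  map_add' f g := by
    simp only [map_add, evalAt_add, ← Finset.sum_add_distrib]
    refine Finset.sum_congr rfl fun k _ => Finset.sum_congr rfl fun j _ => ?_
    ring

theorem phiJ_apply {n : ℕ} (a : Fin n → ℂ) (U : Matrix (Fin n) (Fin n) ℂ) (v : Fin n → ℂ)
    (f : CPoly n) : phiJ a U v f = ∑ k, ∑ j, U k j *
    (evalAt a (pderiv (Sum.inr k) (pderiv (Sum.inl j) f))
      + (starRingEnd ℂ) (v k) * evalAt a (pderiv (Sum.inl j) f)
      + v j * evalAt a (pderiv (Sum.inr k) f)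
      + (starRingEnd ℂ) (v k) * v j * evalAt a f) := rfl

theorem quad_eq {n : ℕ} (U : Matrix (Fin n) (Fin n) ℂ) (w : Fin n → ℂ) :
    star w ⬝ᵥ (U *ᵥ w) = ∑ k, ∑ j, U k j * ((starRingEnd ℂ) (w k) * w j) := by
  simp only [dotProduct, Matrix.mulVec, Finset.mul_sum]
  refine Finset.sum_congr rfl fun k _ => Finset.sum_congr rfl fun j _ => ?_
  simp only [Pi.star_apply, starRingEnd_apply]
  ring

theorem exists_quad_pos {n : ℕ} (U : Matrix (Fin n) (Fin n) ℂ) (hU : U.PosSemidef)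
    (h0 : U ≠ 0) : ∃ c : Fin n → ℂ, 0 < (star c ⬝ᵥ (U *ᵥ c)).re := by
  by_contra hcon
  push Not at hcon
  apply h0
  have hz : ∀ c : Fin n → ℂ, U *ᵥ c = 0 := by
    intro c
    rw [← hU.dotProduct_mulVec_zero_iff]
    have := hU.dotProduct_mulVec_nonneg c
    exact le_antisymm (by
      rw [Complex.le_def] at this ⊢
      exact ⟨hcon c, this.2.symm⟩) this
  ext i j
  have := congrFun (hz (Pi.single j 1)) i
  simpa using this

theorem case_J {n : ℕ} {I : Set (CPoly n)} (a : Fin n → ℂ) (U : Matrix (Fin n) (Fin n) ℂ)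
    (hU : U.PosSemidef) (h0 : U ≠ 0) (hI : I ⊆ Jau a U) :
    ∃ f : CPoly n, hermStar n f = f ∧ (∀ a ∈ VR n I, 0 < (evalAt a f).re) ∧
      f ∉ SigmaHPlus n I := by
  obtain ⟨c, hc⟩ := exists_quad_pos U hU h0
  let l : MvPolynomial (Fin n) ℂ := ∑ j, C (c j) * (X j - C (a j))
  let L : CPoly n := hol n l
  let q : CPoly n := L + hermStar n L - 1
  let f : CPoly n := C (((1 / 2 : ℝ)) : ℂ) + q * q
  have hq : hermStar n q = q := by
    simp only [q, map_sub, map_add, hermStar_invol, map_one]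
    ring
  refine ⟨f, ?_, ?_, not_mem_of_functional (phiJ a U c) ?_ ?_ f ?_⟩
  · simp only [f, map_add, map_mul, hq, hermStar_C, Complex.conj_ofReal]
  · intro x _
    have h1 : (evalAt x q).im = 0 := by
      have := evalAt_hermStar x q
      rw [hq] at this
      exact Complex.conj_eq_iff_im.mp this.symm
    simp only [f, evalAt_add, evalAt_mul, evalAt_C, Complex.add_re, Complex.mul_re, h1,
      Complex.ofReal_re]
    nlinarith [sq_nonneg (evalAt x q).re]
  · intro p
    have : phiJ a U c (hol n p * hermStar n (hol n p)) =
        star (fun j => evalAt a (pderiv (Sum.inl j) (hol n p)) + evalAt a (hol n p) * c j) ⬝ᵥ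
        (U *ᵥ (fun j => evalAt a (pderiv (Sum.inl j) (hol n p)) + evalAt a (hol n p) * c j)) := by
      rw [quad_eq, phiJ_apply]
      refine Finset.sum_congr rfl fun k _ => Finset.sum_congr rfl fun j _ => ?_
      simp only [pderiv_mul, pderiv_inl_hermStar_hol, pderiv_inr_hol, mul_zero, add_zero,
        zero_mul, zero_add, pderiv_inl_hol, pderiv_hermStar, evalAt_mul, evalAt_hermStar, map_add,
        map_mul]
      ring
    rw [this]
    exact (Complex.le_def.mp (hU.dotProduct_mulVec_nonneg _)).1
  · intro g hg
    obtain ⟨h1, h2, h3, h4⟩ := hI hg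
    have e2 : ∀ k, ∑ j, U k j * evalAt a (pderiv (Sum.inl j) g) = 0 := fun k => congrFun h2 k
    have e3 : ∀ j, ∑ k, U k j * evalAt a (pderiv (Sum.inr k) g) = 0 := by
      intro j
      have := congrFun h3 j
      simp only [Matrix.mulVec, dotProduct, Matrix.map_apply, Pi.zero_apply] at this
      rw [← this]
      refine Finset.sum_congr rfl fun k _ => ?_
      rw [← hU.1.apply k j]
      rfl
    have e4 : ∑ k, ∑ j, U k j * evalAt a (pderiv (Sum.inr k) (pderiv (Sum.inl j) g)) = 0 := by
      rw [← h4]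
      simp [Matrix.trace, Matrix.mul_apply]
    rw [phiJ_apply]
    simp only [h1, mul_zero, add_zero, mul_add, Finset.sum_add_distrib, e4, zero_add]
    have s2 : ∑ k, ∑ j, U k j * ((starRingEnd ℂ) (c k) * evalAt a (pderiv (Sum.inl j) g)) = 0 := by
      refine Finset.sum_eq_zero fun k _ => ?_
      rw [← mul_zero ((starRingEnd ℂ) (c k)), ← e2 k, Finset.mul_sum]
      exact Finset.sum_congr rfl fun j _ => by ring
    have s3 : ∑ k, ∑ j, U k j * (c j * evalAt a (pderiv (Sum.inr k) g)) = 0 := by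
      rw [Finset.sum_comm]
      refine Finset.sum_eq_zero fun j _ => ?_
      rw [← mul_zero (c j), ← e3 j, Finset.mul_sum]
      exact Finset.sum_congr rfl fun k _ => by ring
    rw [s2, s3, add_zero]
  · have dl : ∀ j, pderiv j l = C (c j) := by
      intro j
      simp [l, pderiv_mul, pderiv_X, Pi.single_apply]
    have el : evalAt a L = 0 := by
      simp only [L, evalAt, evalPair_hol]
      simp [l]
    have eq : evalAt a q = -1 := by
      have : evalAt a q = evalAt a L + evalAt a (hermStar n L) - 1 := by
        simp [q, evalAt, evalPair]
      rw [this, evalAt_hermStar, el]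
      simp
    have d1 : ∀ j, pderiv (Sum.inl j) q = C (c j) := by
      intro j
      simp only [q, L, map_sub, map_add, pderiv_inl_hermStar_hol, pderiv_inl_hol, dl, pderiv_one]
      simp [hol]
    have d2 : ∀ k, pderiv (Sum.inr k) q = C ((starRingEnd ℂ) (c k)) := by
      intro k
      rw [← hq, pderiv_hermStar, d1, hermStar_C]
    have : phiJ a U c f = ((-1 / 2 : ℝ) : ℂ) * (star c ⬝ᵥ (U *ᵥ c)) := by
      rw [quad_eq, phiJ_apply, Finset.mul_sum]
      refine Finset.sum_congr rfl fun k _ => ?_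
      rw [Finset.mul_sum]
      refine Finset.sum_congr rfl fun j _ => ?_
      simp only [f, map_add, pderiv_mul, pderiv_C, d1, d2, evalAt_add, evalAt_mul, evalAt_C, eq,
        zero_add, zero_mul, mul_zero, add_zero]
      push_cast
      ring
    rw [this, Complex.re_ofReal_mul]
    linarith

/-- Corollary `idtheorobst`: if an ideal `I ⊆ ℝ[x,y]` is contained in some `I(a,b)`
(`a ≠ b`) or in some `J(a,U)` (`U ≠ 0` psd hermitian), then some `f ∈ ℝ[x,y]` is
strictly positive on `V_ℝ(I)` but is not a sum of hermitian squares modulo `I`. -/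
theorem statement6 (n : ℕ) (hn : 0 < n) (I : Set (CPoly n)) (hI : IsRealIdeal n I)
    (h : (∃ a b : Fin n → ℂ, a ≠ b ∧ I ⊆ Iab a b) ∨
      ∃ (a : Fin n → ℂ) (U : Matrix (Fin n) (Fin n) ℂ),
        U.PosSemidef ∧ U ≠ 0 ∧ I ⊆ Jau a U) :
    ∃ f : CPoly n, hermStar n f = f ∧ (∀ a ∈ VR n I, 0 < (evalAt a f).re) ∧
      f ∉ SigmaHPlus n I := by
  rcases h with ⟨a, b, hab, h⟩ | ⟨a, U, hU, h0, h⟩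
  · exact case_ab a b hab h
  · exact case_J a U hU h0 h

end
end

section
/- Let n = 1, let m ≥ 2 be an integer and let a_0, …, a_{m−1} ≥ 0 be real numbers. Set f = |z|^{2m} − Σ_{j=0}^{m−1} a_j |z|^{2j} ∈ ℝ[x,y]. Then the semiring Σ_h + (f) is not archimedean; in particular, there exist no c ∈ ℝ and g ∈ ℂ[z,z̄] with g = g* such that c − |z|² + f·g ∈ Σ_h. -/
open MvPolynomial Complex Matrix MeasureTheory ComplexOrder

noncomputable section

universe u

lemma aux_coeff_mul (u v : Fin 1 →₀ ℕ) (p q : MvPolynomial (Fin 1) ℂ) :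
    coeff (u.mapDomain Sum.inl + v.mapDomain Sum.inr : Fin 1 ⊕ Fin 1 →₀ ℕ)
      (rename Sum.inl p * rename Sum.inr q) = coeff u p * coeff v q := by
  classical
  induction p using MvPolynomial.induction_on' with
  | add p1 p2 h1 h2 => simp [add_mul, h1, h2]
  | monomial s x =>
    induction q using MvPolynomial.induction_on' with
    | add p1 p2 h1 h2 => simp [mul_add, h1, h2]
    | monomial t y =>
      simp only [rename_monomial, monomial_mul, coeff_monomial]
      have key : (s.mapDomain Sum.inl + t.mapDomain Sum.inr : Fin 1 ⊕ Fin 1 →₀ ℕ) =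
          u.mapDomain Sum.inl + v.mapDomain Sum.inr ↔ s = u ∧ t = v := by
        constructor
        · intro h
          have e1 : ∀ w z : Fin 1 →₀ ℕ, ∀ i, (w.mapDomain Sum.inl + z.mapDomain Sum.inr : Fin 1 ⊕ Fin 1 →₀ ℕ) (Sum.inl i) = w i := by
            intro w z i
            rw [Finsupp.add_apply, Finsupp.mapDomain_apply Sum.inl_injective,
              Finsupp.mapDomain_notin_range _ _ (by simp), add_zero]
          have e2 : ∀ w z : Fin 1 →₀ ℕ, ∀ i, (w.mapDomain Sum.inl + z.mapDomain Sum.inr : Fin 1 ⊕ Fin 1 →₀ ℕ) (Sum.inr i) = z i := by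
            intro w z i
            rw [Finsupp.add_apply, Finsupp.mapDomain_apply Sum.inr_injective,
              Finsupp.mapDomain_notin_range _ _ (by simp), zero_add]
          constructor
          · ext i
            rw [← e1 s t, h, e1]
          · ext i
            rw [← e2 s t, h, e2]
        · rintro ⟨rfl, rfl⟩; rfl
      simp only [key]
      by_cases h1 : s = u <;> by_cases h2 : t = v <;> simp [h1, h2]

/-- The diagonal exponent. -/
def dg (k : ℕ) : Fin 1 ⊕ Fin 1 →₀ ℕ := Finsupp.single (Sum.inl 0) k + Finsupp.single (Sum.inr 0) k

lemma dg_inj {j k : ℕ} : dg j = dg k ↔ j = k := by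
  constructor
  · intro h
    have := DFunLike.congr_fun h (Sum.inl 0)
    simpa [dg] using this
  · rintro rfl; rfl

lemma dg_le {j k : ℕ} : dg j ≤ dg k ↔ j ≤ k := by
  constructor
  · intro h
    have := h (Sum.inl 0)
    simpa [dg] using this
  · intro h
    exact add_le_add (Finsupp.single_mono h) (Finsupp.single_mono h)

lemma dg_sub (k j : ℕ) : dg k - dg j = dg (k - j) := by
  ext i
  rcases i with i | i <;> fin_cases i <;> simp [dg]

lemma tpow (j : ℕ) : (X (Sum.inl 0) * X (Sum.inr 0) : CPoly 1) ^ j = monomial (dg j) 1 := by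
  rw [mul_pow, X_pow_eq_monomial, X_pow_eq_monomial, monomial_mul]
  simp [dg]

lemma coeff_tpow_mul (j k : ℕ) (g : CPoly 1) :
    coeff (dg k) ((X (Sum.inl 0) * X (Sum.inr 0) : CPoly 1) ^ j * g) =
      if j ≤ k then coeff (dg (k - j)) g else 0 := by
  rw [tpow, coeff_monomial_mul', dg_sub]
  simp [dg_le]

lemma sigma_coeff {s : CPoly 1} (hs : s ∈ SigmaH 1) (k : ℕ) : 0 ≤ (coeff (dg k) s).re := by
  obtain ⟨N, p, rfl⟩ := hs
  rw [coeff_sum, Complex.re_sum]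
  refine Finset.sum_nonneg fun i _ => ?_
  have h1 : hermStar 1 (hol 1 (p i)) = rename Sum.inr (map (starRingEnd ℂ) (p i)) := by
    simp only [hermStar, hol, RingHom.comp_apply, AlgHom.toRingHom_eq_coe, RingHom.coe_coe,
      map_rename, rename_rename]
    rfl
  have h2 : dg k = (Finsupp.single 0 k : Fin 1 →₀ ℕ).mapDomain Sum.inl +
      (Finsupp.single 0 k : Fin 1 →₀ ℕ).mapDomain Sum.inr := by
    simp [dg, Finsupp.mapDomain_single]
  rw [h1, h2, hol, aux_coeff_mul, coeff_map, Complex.mul_conj]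
  simpa using Complex.normSq_nonneg _

lemma main_aux (m : ℕ) (hm : 2 ≤ m) (a : ℕ → ℝ) (ha : ∀ j, 0 ≤ a j) (f : CPoly 1)
    (hf : f = (X (Sum.inl 0) * X (Sum.inr 0)) ^ m -
      ∑ j ∈ Finset.range m, C ((a j : ℝ) : ℂ) * (X (Sum.inl 0) * X (Sum.inr 0)) ^ j)
    (c : ℝ) (g : CPoly 1)
    (hs : (C (c : ℂ) - X (Sum.inl 0) * X (Sum.inr 0) + f * g) ∈ SigmaH 1) : False := by
  classical
  set G : ℕ → ℝ := fun k => (coeff (dg k) g).re with hG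
  have hfg : ∀ k, (coeff (dg k) (f * g)).re = (if m ≤ k then G (k - m) else 0) -
      ∑ j ∈ Finset.range m, a j * (if j ≤ k then G (k - j) else 0) := by
    intro k
    rw [hf, sub_mul, Finset.sum_mul, coeff_sub, coeff_sum, coeff_tpow_mul, Complex.sub_re,
      Complex.re_sum]
    congr 1
    · split_ifs <;> simp [hG]
    · refine Finset.sum_congr rfl fun j _ => ?_
      rw [mul_assoc, coeff_C_mul, coeff_tpow_mul, Complex.re_ofReal_mul]
      split_ifs <;> simp [hG]
  have ht : ∀ k, coeff (dg k) (X (Sum.inl 0) * X (Sum.inr 0) : CPoly 1) = if k = 1 then 1 else 0 := by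
    intro k
    have := tpow 1
    rw [pow_one] at this
    rw [this, coeff_monomial]
    simp [dg_inj, eq_comm]
  have hC : ∀ k, 1 ≤ k → coeff (dg k) (C (c : ℂ) : CPoly 1) = 0 := by
    intro k hk
    rw [coeff_C, if_neg]
    intro h
    have h0 : dg 0 = 0 := by simp [dg]
    rw [← h0, dg_inj] at h
    omega
  have hpos := fun k => sigma_coeff hs k
  simp only [coeff_add, coeff_sub, Complex.add_re, Complex.sub_re, hfg] at hpos
  -- all diagonal coefficients are nonnegative
  have hbd : ∃ B, ∀ k, B ≤ k → G k = 0 := by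
    refine ⟨g.totalDegree + 1, fun k hk => ?_⟩
    have : coeff (dg k) g = 0 := by
      by_contra hne
      have h1 := le_totalDegree (mem_support_iff.mpr hne)
      have h2 : (dg k).sum (fun _ e => e) = k + k := by
        rw [dg, Finsupp.sum_add_index' (by simp) (by simp)]
        simp
      omega
    simp [hG, this]
  obtain ⟨B, hB⟩ := hbd
  have hGn : ∀ n k, B ≤ k + n → 0 ≤ G k := by
    intro n
    induction n with
    | zero => intro k hk; exact (hB k hk).ge
    | succ n ih =>
      intro k hk
      have h := hpos (m + k)
      rw [hC _ (by omega), ht, if_neg (by omega), if_pos (by omega)] at h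
      have hsum : 0 ≤ ∑ j ∈ Finset.range m, a j * (if j ≤ m + k then G (m + k - j) else 0) := by
        refine Finset.sum_nonneg fun j hj => mul_nonneg (ha j) ?_
        have := Finset.mem_range.mp hj
        rw [if_pos (by omega)]
        exact ih _ (by omega)
      rw [Nat.add_sub_cancel_left] at h
      simp only [Complex.zero_re] at h
      linarith
  have h := hpos 1
  rw [hC _ le_rfl, ht, if_pos rfl, if_neg (by omega)] at h
  have hsum : 0 ≤ ∑ j ∈ Finset.range m, a j * (if j ≤ 1 then G (1 - j) else 0) := by
    refine Finset.sum_nonneg fun j hj => mul_nonneg (ha j) ?_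
    split_ifs
    · exact hGn B _ (by omega)
    · exact le_rfl
  simp only [Complex.zero_re, Complex.one_re] at h
  linarith

/-- Example `exnotarch`: for `f = |z|^{2m} - ∑_{j<m} a_j |z|^{2j}` with `m ≥ 2` and
`a_j ≥ 0`, the semiring `Σ_h + (f)` is not archimedean; in particular there are no
`c ∈ ℝ` and real `g` with `c - |z|² + f·g ∈ Σ_h`. -/
theorem statement8 (m : ℕ) (hm : 2 ≤ m) (a : ℕ → ℝ) (ha : ∀ j, 0 ≤ a j) (f : CPoly 1)
    (hf : f = (X (Sum.inl 0) * X (Sum.inr 0)) ^ m -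
      ∑ j ∈ Finset.range m, C ((a j : ℝ) : ℂ) * (X (Sum.inl 0) * X (Sum.inr 0)) ^ j) :
    (¬ IsArchSet 1 (SigmaHPlus 1 {x : CPoly 1 | ∃ h, hermStar 1 h = h ∧ x = f * h})) ∧
    ¬ ∃ (c : ℝ) (g : CPoly 1), hermStar 1 g = g ∧
      (C (c : ℂ) - X (Sum.inl 0) * X (Sum.inr 0) + f * g) ∈ SigmaH 1 := by
  refine ⟨fun h => ?_, fun ⟨c, g, _, hs⟩ => main_aux m hm a ha f hf c g hs⟩
  obtain ⟨c, -, s, hs, x, ⟨h', -, rfl⟩, he⟩ := h (X (Sum.inl 0) * X (Sum.inr 0)) (by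
    simp [hermStar, mul_comm])
  refine main_aux m hm a ha f hf c (-h') ?_
  rw [he, mul_neg, add_neg_cancel_right]
  exact hs

end
end

section
/- Let n ≥ 1 and let 0 ≠ f ∈ Σ_h (so f = f*). Then the leading form lf(f), i.e., the nonvanishing homogeneous part of f of highest total degree, again belongs to Σ_h. In particular, when n = 1, the total degree of f is an even number 2m and lf(f) = a·(zz̄)^m for some real number a > 0. -/
open MvPolynomial Complex Matrix MeasureTheory ComplexOrder

noncomputable section

universe u

theorem aux_coeff (n : ℕ) (p q : MvPolynomial (Fin n) ℂ) (m : Fin n ⊕ Fin n →₀ ℕ) :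
    coeff m (hol n p * hermStar n (hol n q)) =
      coeff (m.comapDomain Sum.inl Sum.inl_injective.injOn) p *
        (starRingEnd ℂ) (coeff (m.comapDomain Sum.inr Sum.inr_injective.injOn) q) := by
  classical
  induction p using MvPolynomial.induction_on' with
  | add p1 p2 h1 h2 => simp only [map_add, add_mul, coeff_add, h1, h2]
  | monomial s a =>
    induction q using MvPolynomial.induction_on' with
    | add p1 p2 h1 h2 => simp only [map_add, mul_add, coeff_add, h1, h2]
    | monomial t b =>
      have key : (s.mapDomain Sum.inl + t.mapDomain Sum.inr = m) ↔
          (s = m.comapDomain Sum.inl Sum.inl_injective.injOn ∧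
            t = m.comapDomain Sum.inr Sum.inr_injective.injOn) := by
        have hl : ∀ j : Fin n, (t.mapDomain (Sum.inr : Fin n → Fin n ⊕ Fin n)) (Sum.inl j) = 0 :=
          fun j => Finsupp.mapDomain_notin_range _ _ (by simp)
        have hr : ∀ j : Fin n, (s.mapDomain (Sum.inl : Fin n → Fin n ⊕ Fin n)) (Sum.inr j) = 0 :=
          fun j => Finsupp.mapDomain_notin_range _ _ (by simp)
        constructor
        · rintro rfl
          constructor <;> ext j
          · simp [Finsupp.comapDomain_apply, hl, Finsupp.mapDomain_apply Sum.inl_injective]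
          · simp [Finsupp.comapDomain_apply, hr, Finsupp.mapDomain_apply Sum.inr_injective]
        · rintro ⟨rfl, rfl⟩
          ext (j | j)
          · simp [hl, Finsupp.mapDomain_apply Sum.inl_injective]
          · simp [hr, Finsupp.mapDomain_apply Sum.inr_injective]
      have e : hol n (monomial s a) * hermStar n (hol n (monomial t b)) =
          monomial (s.mapDomain Sum.inl + t.mapDomain Sum.inr) (a * (starRingEnd ℂ) b) := by
        have : (Sum.swap ∘ Sum.inl : Fin n → Fin n ⊕ Fin n) = Sum.inr := rfl
        simp [hol, hermStar, rename_monomial, ← Finsupp.mapDomain_comp, this, monomial_mul]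
      rw [e, coeff_monomial, coeff_monomial, coeff_monomial]
      simp only [key]
      by_cases h1 : s = m.comapDomain Sum.inl Sum.inl_injective.injOn <;>
        by_cases h2 : t = m.comapDomain Sum.inr Sum.inr_injective.injOn <;> simp [h1, h2]

theorem aux_degree (n : ℕ) (m : Fin n ⊕ Fin n →₀ ℕ) :
    m.degree = (m.comapDomain Sum.inl Sum.inl_injective.injOn).degree +
      (m.comapDomain Sum.inr Sum.inr_injective.injOn).degree := by
  simp [Finsupp.degree_eq_sum, Finsupp.comapDomain_apply]

theorem aux_zero {n : ℕ} (p : MvPolynomial (Fin n) ℂ) (m : Fin n →₀ ℕ)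
    (h : p.totalDegree < m.degree) : coeff m p = 0 := by
  by_contra hc
  have := le_totalDegree (mem_support_iff.2 hc)
  rw [Finsupp.degree_apply] at h
  exact absurd this (not_le.2 h)

theorem aux_hc (n d : ℕ) (p : MvPolynomial (Fin n) ℂ) (hp : p.totalDegree ≤ d) :
    homogeneousComponent (2 * d) (hol n p * hermStar n (hol n p)) =
      hol n (homogeneousComponent d p) * hermStar n (hol n (homogeneousComponent d p)) := by
  classical
  ext m
  rw [coeff_homogeneousComponent, aux_coeff, aux_coeff, coeff_homogeneousComponent,
    coeff_homogeneousComponent, aux_degree]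
  set u := m.comapDomain Sum.inl Sum.inl_injective.injOn
  set v := m.comapDomain Sum.inr Sum.inr_injective.injOn
  rcases lt_trichotomy u.degree d with h | h | h
  · rw [if_neg h.ne, zero_mul]
    split_ifs with h'
    · rw [aux_zero p v (by omega)]; simp
    · rfl
  · rw [if_pos h]
    by_cases h2 : v.degree = d
    · rw [if_pos (by omega), if_pos h2]
    · rw [if_neg (by omega), if_neg h2]; simp
  · rw [if_neg h.ne', zero_mul, aux_zero p u (by omega)]; simp

theorem statement10 (n : ℕ) (hn : 0 < n) (f : CPoly n) (hf : f ∈ SigmaH n)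
    (h0 : f ≠ 0) :
    homogeneousComponent f.totalDegree f ∈ SigmaH n ∧
    (n = 1 → ∃ (m : ℕ) (a : ℝ), 0 < a ∧ f.totalDegree = 2 * m ∧
      homogeneousComponent f.totalDegree f =
        C (a : ℂ) * (X (Sum.inl ⟨0, hn⟩) * X (Sum.inr ⟨0, hn⟩)) ^ m) := by
  classical
  obtain ⟨k, p, rfl⟩ := hf
  have hne : (Finset.univ.filter fun i => p i ≠ 0).Nonempty := by
    by_contra hc
    rw [Finset.not_nonempty_iff_eq_empty, Finset.filter_eq_empty_iff] at hc
    apply h0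
    refine Finset.sum_eq_zero fun i hi => ?_
    rw [not_not.1 (hc hi)]; simp
  obtain ⟨i0, hi0, hmax⟩ := Finset.exists_max_image _ (fun i => (p i).totalDegree) hne
  have hi0' : p i0 ≠ 0 := (Finset.mem_filter.1 hi0).2
  obtain ⟨d, hd⟩ : ∃ d, d = (p i0).totalDegree := ⟨_, rfl⟩
  have hle : ∀ i, (p i).totalDegree ≤ d := by
    intro i
    by_cases h : p i = 0
    · simp [h]
    · rw [hd]; exact hmax i (by simp [h])
  obtain ⟨s, hs, hsd⟩ : ∃ s ∈ (p i0).support, s.degree = d := by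
    obtain ⟨s, hs, h⟩ := Finset.exists_mem_eq_sup _ (support_nonempty.2 hi0')
      (fun s : Fin n →₀ ℕ => s.sum fun _ e => e)
    exact ⟨s, hs, by rw [hd, totalDegree, h, Finsupp.degree_apply]; rfl⟩
  have hcomp : homogeneousComponent (2 * d) (∑ i, hol n (p i) * hermStar n (hol n (p i))) =
      ∑ i, hol n (homogeneousComponent d (p i)) *
        hermStar n (hol n (homogeneousComponent d (p i))) := by
    rw [map_sum]
    exact Finset.sum_congr rfl fun i _ => aux_hc n d (p i) (hle i)
  have hco : ∀ (r : Fin k → MvPolynomial (Fin n) ℂ) (m : Fin n ⊕ Fin n →₀ ℕ),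
      coeff m (∑ i, hol n (r i) * hermStar n (hol n (r i))) =
      ∑ i, coeff (m.comapDomain Sum.inl Sum.inl_injective.injOn) (r i) *
        (starRingEnd ℂ) (coeff (m.comapDomain Sum.inr Sum.inr_injective.injOn) (r i)) := by
    intro r m
    rw [coeff_sum]
    exact Finset.sum_congr rfl fun i _ => aux_coeff n _ _ m
  have hpos : 0 < ∑ i, Complex.normSq (coeff s (p i)) :=
    Finset.sum_pos' (fun i _ => Complex.normSq_nonneg _)
      ⟨i0, Finset.mem_univ _, Complex.normSq_pos.2 (mem_support_iff.1 hs)⟩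
  have hdeg : (∑ i, hol n (p i) * hermStar n (hol n (p i))).totalDegree = 2 * d := by
    apply le_antisymm
    · refine Finset.sup_le fun m hm => ?_
      by_contra hlt
      have hlt' : 2 * d < m.degree := by rw [Finsupp.degree_apply]; exact not_le.1 hlt
      rw [aux_degree] at hlt'
      apply mem_support_iff.1 hm
      rw [hco]
      refine Finset.sum_eq_zero fun i _ => ?_
      have := hle i
      rcases lt_or_ge d (m.comapDomain Sum.inl Sum.inl_injective.injOn).degree with h | h
      · rw [aux_zero _ _ (lt_of_le_of_lt this h), zero_mul]
      · rw [aux_zero (p i) (m.comapDomain Sum.inr Sum.inr_injective.injOn) (by omega)]; simp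
    · obtain ⟨M, hM⟩ : ∃ M : Fin n ⊕ Fin n →₀ ℕ, M = Finsupp.sumElim s s := ⟨_, rfl⟩
      have e1 : M.comapDomain Sum.inl Sum.inl_injective.injOn = s := by
        ext j; simp [hM, Finsupp.comapDomain_apply]
      have e2 : M.comapDomain Sum.inr Sum.inr_injective.injOn = s := by
        ext j; simp [hM, Finsupp.comapDomain_apply]
      have hMd : M.degree = 2 * d := by rw [aux_degree, e1, e2]; omega
      rw [← hMd, Finsupp.degree_apply]
      apply le_totalDegree
      rw [mem_support_iff, hco, e1, e2]
      simp only [Complex.mul_conj]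
      exact_mod_cast hpos.ne'
  rw [hdeg, hcomp]
  refine ⟨⟨k, _, rfl⟩, ?_⟩
  rintro rfl
  refine ⟨d, _, hpos, rfl, ?_⟩
  have hs1 : ∀ t : Fin 1 →₀ ℕ, t.degree = t 0 := by
    intro t; simp [Finsupp.degree_eq_sum]
  have hq : ∀ i, homogeneousComponent d (p i) = C (coeff s (p i)) * X 0 ^ d := by
    intro i
    ext t
    rw [coeff_homogeneousComponent, X_pow_eq_monomial, C_mul_monomial, coeff_monomial, mul_one]
    by_cases h : t.degree = d
    · have h1 : t = s := by
        ext; simpa [hs1] using h.trans hsd.symm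
      have h2 : Finsupp.single 0 d = t := by
        ext; simpa [hs1] using h.symm
      rw [if_pos h, if_pos h2, h1]
    · rw [if_neg h, if_neg]
      rintro rfl
      exact h (by simp)
  have : ((⟨0, hn⟩ : Fin 1)) = 0 := rfl
  simp only [hq, this]
  push_cast
  rw [map_sum, Finset.sum_mul]
  refine Finset.sum_congr rfl fun i _ => ?_
  rw [← Complex.mul_conj]
  simp [hol, hermStar]
  ring

end
end

section
/- Let n = 1 and let I = (x² + y² − 1)·(x − 1, y) ⊆ ℝ[x,y] be the ideal of the unit circle with a thickened point at 1 (equivalently, I = J ∩ ℝ[x,y] where J is the ideal of ℂ[z,z̄] generated by (z−1)(zz̄−1) and (z̄−1)(zz̄−1)). Then: (1) I satisfies (Sf): every complex square matrix T with ψ_T(f) = 0 for all f ∈ I is unitary, hence normal; (2) I does not satisfy (S): there exists a bounded operator T on a complex Hilbert space with ψ_T(f) = 0 for all f ∈ I that is not subnormal (indeed T = S + π, where S is the unilateral shift on ℓ²(ℕ) and π is the orthogonal projection onto the span of the first basis vector, satisfies (T* − 1)(T*T − 1) = 0 but is not subnormal). -/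
open MvPolynomial Complex Matrix MeasureTheory ComplexOrder

noncomputable section

universe u

/-- Hereditary calculus in a general algebra, as a linear map. -/
def psiLin {A : Type*} [Ring A] [Algebra ℂ A] (a b : A) : CPoly 1 →ₗ[ℂ] A :=
  Finsupp.lsum ℂ (fun m : (Fin 1 ⊕ Fin 1) →₀ ℕ =>
    (LinearMap.toSpanSingleton ℂ A (a ^ (m (Sum.inr 0)) * b ^ (m (Sum.inl 0))))) ∘ₗ
    (AddMonoidAlgebra.coeffLinearEquiv ℂ).toLinearMap

theorem psiLin_apply {A : Type*} [Ring A] [Algebra ℂ A] (a b : A) (f : CPoly 1) :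
    psiLin a b f = ∑ m ∈ f.support, f.coeff m •
      (a ^ (m (Sum.inr 0)) * b ^ (m (Sum.inl 0))) := by
  rfl

theorem psiLin_monomial {A : Type*} [Ring A] [Algebra ℂ A] (a b : A)
    (m : (Fin 1 ⊕ Fin 1) →₀ ℕ) (c : ℂ) :
    psiLin a b (monomial m c) = c • (a ^ (m (Sum.inr 0)) * b ^ (m (Sum.inl 0))) := by
  classical
  rw [psiLin_apply, MvPolynomial.support_monomial]
  split_ifs with h
  · simp [h]
  · simp

theorem psiLin_mul_inl {A : Type*} [Ring A] [Algebra ℂ A] (a b : A) (f : CPoly 1) :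
    psiLin a b (f * X (Sum.inl 0)) = psiLin a b f * b := by
  induction f using MvPolynomial.monomial_add_induction_on with
  | C c =>
    rw [← MvPolynomial.monomial_zero', MvPolynomial.X, monomial_mul, psiLin_monomial,
      psiLin_monomial]
    simp
  | monomial_add m c f _ _ ih =>
    rw [add_mul, map_add, ih, map_add, add_mul, MvPolynomial.X, monomial_mul, psiLin_monomial,
      psiLin_monomial]
    simp [pow_succ, mul_assoc]

theorem psiLin_mul_inr {A : Type*} [Ring A] [Algebra ℂ A] (a b : A) (f : CPoly 1) :
    psiLin a b (f * X (Sum.inr 0)) = a * psiLin a b f := by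
  induction f using MvPolynomial.monomial_add_induction_on with
  | C c =>
    rw [← MvPolynomial.monomial_zero', MvPolynomial.X, monomial_mul, psiLin_monomial,
      psiLin_monomial]
    simp
  | monomial_add m c f _ _ ih =>
    rw [add_mul, map_add, ih, map_add, mul_add, MvPolynomial.X, monomial_mul, psiLin_monomial,
      psiLin_monomial]
    simp [pow_succ', mul_assoc]

theorem psiLin_one {A : Type*} [Ring A] [Algebra ℂ A] (a b : A) :
    psiLin a b 1 = 1 := by
  have := psiLin_monomial a b 0 1
  simpa using this

theorem psiLin_mul_zero {A : Type*} [Ring A] [Algebra ℂ A] (a b : A) (g p : CPoly 1)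
    (hg : psiLin a b g = 0) : psiLin a b (p * g) = 0 := by
  induction p using MvPolynomial.induction_on with
  | C c => rw [MvPolynomial.C_mul', map_smul, hg, smul_zero]
  | add p q hp hq => rw [add_mul, map_add, hp, hq, add_zero]
  | mul_X p i hp =>
    rw [mul_right_comm]
    rcases i with i | i
    · rw [Subsingleton.elim i 0, psiLin_mul_inl, hp, zero_mul]
    · rw [Subsingleton.elim i 0, psiLin_mul_inr, hp, mul_zero]

theorem psiLin_g1 {A : Type*} [Ring A] [Algebra ℂ A] (a b : A) :
    psiLin a b ((X (Sum.inl 0) - 1) * (X (Sum.inl 0) * X (Sum.inr 0) - 1))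
      = (a * b - 1) * (b - 1) := by
  have : ((X (Sum.inl 0) - 1) * (X (Sum.inl 0) * X (Sum.inr 0) - 1) : CPoly 1)
     = 1 * X (Sum.inl 0) * X (Sum.inl 0) * X (Sum.inr 0) - 1 * X (Sum.inl 0) * X (Sum.inr 0)
       - 1 * X (Sum.inl 0) + 1 := by ring
  rw [this]
  simp only [map_sub, map_add, psiLin_mul_inl, psiLin_mul_inr, psiLin_one]
  noncomm_ring

theorem psiLin_g2 {A : Type*} [Ring A] [Algebra ℂ A] (a b : A) :
    psiLin a b ((X (Sum.inr 0) - 1) * (X (Sum.inl 0) * X (Sum.inr 0) - 1))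
      = (a - 1) * (a * b - 1) := by
  have : ((X (Sum.inr 0) - 1) * (X (Sum.inl 0) * X (Sum.inr 0) - 1) : CPoly 1)
     = 1 * X (Sum.inl 0) * X (Sum.inr 0) * X (Sum.inr 0) - 1 * X (Sum.inl 0) * X (Sum.inr 0)
       - 1 * X (Sum.inr 0) + 1 := by ring
  rw [this]
  simp only [map_sub, map_add, psiLin_mul_inl, psiLin_mul_inr, psiLin_one]
  noncomm_ring

theorem psiMat_eq {m : ℕ} (T : Matrix (Fin m) (Fin m) ℂ) (f : CPoly 1) :
    psiMat (fun _ : Fin 1 => T) f = psiLin Tᴴ T f := by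
  rw [psiLin_apply, psiMat]; simp

theorem psiOp_eq {E : Type u} [NormedAddCommGroup E] [InnerProductSpace ℂ E]
    [CompleteSpace E] (T : E →L[ℂ] E) (f : CPoly 1) :
    psiOp (fun _ : Fin 1 => T) f = psiLin (ContinuousLinearMap.adjoint T) T f := by
  rw [psiLin_apply, psiOp]; simp

theorem matrix_unitary {m : ℕ} (T : Matrix (Fin m) (Fin m) ℂ)
    (h1 : (Tᴴ * T - 1) * (T - 1) = 0) : Tᴴ * T = 1 := by
  obtain ⟨A, hA⟩ : ∃ A, A = Tᴴ * T - 1 := ⟨_, rfl⟩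
  rw [← hA] at h1
  have hTT : Tᴴ * T = 1 + A := by rw [hA]; abel
  have hAh : Aᴴ = A := by rw [hA]; simp
  have hAT : A * T = A := by rw [mul_sub, mul_one, sub_eq_zero] at h1; exact h1
  have hTA : Tᴴ * A = A := by
    have := congrArg conjTranspose hAT
    rwa [conjTranspose_mul, hAh] at this
  -- `T` is invertible, with left inverse `Tᴴ - A`
  have hL : (Tᴴ - A) * T = 1 := by rw [sub_mul, hTT, hAT]; abel
  have hR : T * (Tᴴ - A) = 1 := mul_eq_one_comm.mp hL
  have hTTs : T * Tᴴ = 1 + T * A := by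
    rw [mul_sub, sub_eq_iff_eq_add] at hR; exact hR
  have hher : A * Tᴴ = T * A := by
    have h := congrArg conjTranspose hTTs
    simp only [conjTranspose_mul, conjTranspose_add, conjTranspose_one,
      conjTranspose_conjTranspose, hAh] at h
    rw [hTTs] at h
    exact (add_left_cancel h).symm
  have h2 : Aᴴ * (A * (Tᴴ - 1)) = 0 := by
    rw [hAh, mul_sub, mul_one, mul_sub, hher, ← mul_assoc, hAT, sub_self]
  have h3 : A * (Tᴴ - 1) = 0 := by
    have : (Aᴴ * A) * (Tᴴ - 1) = 0 := by rw [mul_assoc]; exact h2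
    exact (Matrix.conjTranspose_mul_self_mul_eq_zero A _).mp this
  have h4 : T * A = A := by
    rw [← hher]; rw [mul_sub, mul_one, sub_eq_zero] at h3; exact h3
  have h5 : A + A * A = A := by
    have : (1 + A) * A = A := by rw [← hTT, mul_assoc, h4, hTA]
    rwa [add_mul, one_mul] at this
  have h6 : Aᴴ * A = 0 := by rw [hAh]; simpa using h5
  have h7 : A = 0 := Matrix.conjTranspose_mul_self_eq_zero.mp h6
  rw [hTT, h7, add_zero]

theorem exists_shift : ∃ (S : lp (fun _ : ℕ => ℂ) 2 →ₗᵢ[ℂ] lp (fun _ : ℕ => ℂ) 2)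
    (e : lp (fun _ : ℕ => ℂ) 2), ‖e‖ = 1 ∧ ∀ x, inner ℂ e (S x) = 0 := by
  classical
  let b : HilbertBasis ℕ ℂ (lp (fun _ : ℕ => ℂ) 2) :=
    HilbertBasis.ofRepr (LinearIsometryEquiv.refl ℂ _)
  have ho : Orthonormal ℂ (fun n => b (n + 1)) :=
    b.orthonormal.comp _ (add_left_injective 1)
  let V := ho.orthogonalFamily
  refine ⟨V.linearIsometry, b 0, b.orthonormal.1 0, fun x => ?_⟩
  have h := (V.hasSum_linearIsometry x).mapL (innerSL ℂ (b 0))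
  have h0 : ∀ i, inner ℂ (b 0) (b (i + 1)) = 0 := fun i =>
    b.orthonormal.2 (by omega)
  refine h.unique ?_
  have hz : ∀ i, innerSL ℂ (b 0) (LinearIsometry.toSpanSingleton ℂ _ (ho.1 i) (x i)) = 0 := by
    intro i
    rw [LinearIsometry.toSpanSingleton_apply, innerSL_apply_apply, inner_smul_right, h0, mul_zero]
  exact (funext hz) ▸ hasSum_zero

theorem normal_ineq {E : Type u} [NormedAddCommGroup E] [InnerProductSpace ℂ E]
    [CompleteSpace E] (N : E →L[ℂ] E) (hN : Commute N (ContinuousLinearMap.adjoint N)) (x : E) :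
    ‖N x‖ ^ 2 ≤ ‖N (N x)‖ * ‖x‖ := by
  have key : ∀ y, ‖ContinuousLinearMap.adjoint N y‖ = ‖N y‖ := by
    intro y
    have h := congrArg (fun M : E →L[ℂ] E => inner ℂ (M y) y) hN.eq
    simp only [mul_apply_eq_comp] at h
    rw [ContinuousLinearMap.adjoint_inner_left, ← ContinuousLinearMap.adjoint_inner_right] at h
    rw [inner_self_eq_norm_sq_to_K, inner_self_eq_norm_sq_to_K] at h
    have h' : ‖ContinuousLinearMap.adjoint N y‖ ^ 2 = ‖N y‖ ^ 2 := by exact_mod_cast h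
    exact (sq_eq_sq₀ (norm_nonneg _) (norm_nonneg _)).mp h'
  have h1 : inner ℂ (ContinuousLinearMap.adjoint N (N x)) x = ((‖N x‖ ^ 2 : ℝ) : ℂ) := by
    rw [ContinuousLinearMap.adjoint_inner_left, inner_self_eq_norm_sq_to_K]; simp
  have h2 := norm_inner_le_norm (𝕜 := ℂ) (ContinuousLinearMap.adjoint N (N x)) x
  rw [h1, key] at h2
  simpa using h2

theorem exists_op : ∃ (T : lp (fun _ : ℕ => ℂ) 2 →L[ℂ] lp (fun _ : ℕ => ℂ) 2),
    (ContinuousLinearMap.adjoint T * T - 1) * (T - 1) = 0 ∧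
    (ContinuousLinearMap.adjoint T - 1) * (ContinuousLinearMap.adjoint T * T - 1) = 0 ∧
    ¬ IsSubnormal (fun _ : Fin 1 => T) := by
  obtain ⟨S, e, he, hS⟩ := exists_shift
  let P : lp (fun _ : ℕ => ℂ) 2 →L[ℂ] lp (fun _ : ℕ => ℂ) 2 :=
    (ContinuousLinearMap.toSpanSingleton ℂ e).comp (innerSL ℂ e)
  have hP : ∀ x, P x = (inner ℂ e x : ℂ) • e := fun x => by simp [P]
  obtain ⟨T, hT⟩ : ∃ T : lp (fun _ : ℕ => ℂ) 2 →L[ℂ] lp (fun _ : ℕ => ℂ) 2,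
    T = S.toContinuousLinearMap + P := ⟨_, rfl⟩
  have hTx : ∀ x, T x = S x + (inner ℂ e x : ℂ) • e := fun x => by rw [hT]; simp [hP]
  have hee : (inner ℂ e e : ℂ) = 1 := by rw [inner_self_eq_norm_sq_to_K, he]; simp
  have hS' : ∀ x, inner ℂ (S x) e = (0 : ℂ) := fun x => inner_eq_zero_symm.mp (hS x)
  have hTi : ∀ x y, (inner ℂ (T x) (T y) : ℂ) = inner ℂ x y + inner ℂ x e * inner ℂ e y := by
    intro x y
    simp only [hTx, inner_add_left, inner_add_right, inner_smul_left, inner_smul_right, hS, hS',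
      hee, S.inner_map_map, inner_conj_symm]
    ring
  have hA : ContinuousLinearMap.adjoint T * T - 1 = P := by
    ext1 y
    refine ext_inner_left ℂ fun x => ?_
    simp only [_root_.sub_apply, mul_apply_eq_comp, inner_sub_right,
      ContinuousLinearMap.adjoint_inner_right, hTi, hP, inner_smul_right,
      one_apply_eq_self]
    ring
  have h1 : (ContinuousLinearMap.adjoint T * T - 1) * (T - 1) = 0 := by
    rw [hA]
    ext1 y
    simp only [_root_.sub_apply, mul_apply_eq_comp, hP, hTx,
      one_apply_eq_self, inner_sub_right, inner_add_right, inner_smul_right, hS, hee]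
    simp
  refine ⟨T, h1, ?_, ?_⟩
  · have := congrArg star h1
    simpa [star_mul, ContinuousLinearMap.star_eq_adjoint] using this
  · rintro ⟨E', _, _, _, ι, N, -, hN, hNι⟩
    have h := normal_ineq (N 0) (hN 0) (ι e)
    rw [hNι, hNι, ι.norm_map, ι.norm_map, ι.norm_map, he, mul_one] at h
    have hn : ∀ x, ‖T x‖ ^ 2 = ‖x‖ ^ 2 + ‖(inner ℂ e x : ℂ)‖ ^ 2 := by
      intro x
      have := hTi x x
      rw [inner_self_eq_norm_sq_to_K, inner_self_eq_norm_sq_to_K, ← inner_conj_symm x e,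
        ← Complex.normSq_eq_conj_mul_self, Complex.normSq_eq_norm_sq] at this
      rw [← Complex.ofReal_inj]
      push_cast
      simpa using this
    have e1 : ‖T e‖ ^ 2 = 2 := by rw [hn, hee, he]; norm_num
    have e2 : ‖T (T e)‖ ^ 2 = 3 := by
      rw [hn, e1, hTx, inner_add_right, inner_smul_right, hS, hee]; norm_num
    rw [e1] at h
    nlinarith [norm_nonneg (T (T e))]


/-- Proposition `sfnots`: the ideal `I = J ∩ ℝ[x,y]`, where
`J = ((z-1)(zz̄-1), (z̄-1)(zz̄-1)) ⊆ ℂ[z,z̄]` (the unit circle with a thickened point),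
satisfies (Sf) — every matrix annihilated by `I` is unitary, hence normal — but not
(S): some bounded operator annihilated by `I` is not subnormal. -/
theorem statement11 (g₁ g₂ : CPoly 1)
    (hg₁ : g₁ = (X (Sum.inl 0) - 1) * (X (Sum.inl 0) * X (Sum.inr 0) - 1))
    (hg₂ : g₂ = (X (Sum.inr 0) - 1) * (X (Sum.inl 0) * X (Sum.inr 0) - 1))
    (I : Set (CPoly 1))
    (hI : I = {g : CPoly 1 | g ∈ Ideal.span {g₁, g₂} ∧ hermStar 1 g = g}) :
    (∀ (m : ℕ) (T : Matrix (Fin m) (Fin m) ℂ),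
      (∀ g ∈ I, psiMat (fun _ : Fin 1 => T) g = 0) → Tᴴ * T = 1 ∧ Commute T Tᴴ) ∧
    ∃ (E : Type) (_ : NormedAddCommGroup E) (_ : InnerProductSpace ℂ E)
      (_ : CompleteSpace E) (T : E →L[ℂ] E),
        (∀ g ∈ I, psiOp (fun _ : Fin 1 => T) g = 0) ∧
        ¬ IsSubnormal (fun _ : Fin 1 => T) := by
  subst hI
  refine ⟨fun m T hT => ?_, ?_⟩
  · have hs1 : hermStar 1 g₁ = g₂ := by
      rw [hg₁, hg₂]; simp [hermStar]; left; ring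
    have hs2 : hermStar 1 g₂ = g₁ := by
      rw [hg₁, hg₂]; simp [hermStar]; left; ring
    have m1 : g₁ ∈ Ideal.span {g₁, g₂} := Ideal.subset_span (by simp)
    have m2 : g₂ ∈ Ideal.span {g₁, g₂} := Ideal.subset_span (by simp)
    have a1 := hT (g₁ + g₂) ⟨add_mem m1 m2, by rw [map_add, hs1, hs2, add_comm]⟩
    have a2 := hT (C Complex.I * (g₁ - g₂)) ⟨Ideal.mul_mem_left _ _ (sub_mem m1 m2), by
      rw [map_mul, map_sub, hs1, hs2]
      have : hermStar 1 (C Complex.I) = - C Complex.I := by simp [hermStar]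
      rw [this]; ring⟩
    rw [psiMat_eq, map_add] at a1
    rw [psiMat_eq, MvPolynomial.C_mul', map_smul, map_sub,
      smul_eq_zero_iff_right Complex.I_ne_zero, sub_eq_zero] at a2
    rw [← a2, ← two_smul ℂ, smul_eq_zero_iff_right two_ne_zero, hg₁, psiLin_g1] at a1
    have hu := matrix_unitary T a1
    exact ⟨hu, (mul_eq_one_comm.mp hu).trans hu.symm⟩
  · obtain ⟨T, h1, h2, h3⟩ := exists_op
    refine ⟨lp (fun _ : ℕ => ℂ) 2, inferInstance, inferInstance, inferInstance, T, ?_, h3⟩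
    rintro g ⟨hg, -⟩
    obtain ⟨p, q, rfl⟩ := Ideal.mem_span_pair.mp hg
    rw [psiOp_eq, map_add, psiLin_mul_zero, psiLin_mul_zero, add_zero]
    · rw [hg₂, psiLin_g2, h2]
    · rw [hg₁, psiLin_g1, h1]

end
end

section
/- Let n ≥ 1 and 0 < ε < 1. Then the polynomial ε + (1 − ‖z‖²)² (where ‖z‖² := |z_1|² + ⋯ + |z_n|²) does not belong to the hermitian module M = Σ_h + Σ_h·(1 − ‖z‖²); that is, there exist no p, q ∈ Σ_h with ε + (1 − ‖z‖²)² = p + q·(1 − ‖z‖²), even though this polynomial is strictly positive on the closed unit ball X_M and M is archimedean. -/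
open MvPolynomial Complex Matrix MeasureTheory ComplexOrder

noncomputable section

universe u

lemma hs_constantCoeff (n : ℕ) (f : CPoly n) :
    constantCoeff (hermStar n f) = (starRingEnd ℂ) (constantCoeff f) := by
  simp [hermStar, constantCoeff_rename, constantCoeff_map]

lemma hs_pderiv (n : ℕ) (j : Fin n) (f : CPoly n) :
    pderiv (Sum.inr j) (hermStar n f) = hermStar n (pderiv (Sum.inl j) f) := by
  have hinj : Function.Injective (Sum.swap : Fin n ⊕ Fin n → Fin n ⊕ Fin n) :=
    Sum.swap_leftInverse.injective
  have h := pderiv_rename hinj (x := Sum.inl j) (p := MvPolynomial.map (starRingEnd ℂ) f)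
  simp only [Sum.swap_inl] at h
  simp [hermStar, h, pderiv_map]

lemma hs_pderiv' (n : ℕ) (j : Fin n) (f : CPoly n) :
    pderiv (Sum.inl j) (hermStar n f) = hermStar n (pderiv (Sum.inr j) f) := by
  have hinj : Function.Injective (Sum.swap : Fin n ⊕ Fin n → Fin n ⊕ Fin n) :=
    Sum.swap_leftInverse.injective
  have h := pderiv_rename hinj (x := Sum.inr j) (p := MvPolynomial.map (starRingEnd ℂ) f)
  simp only [Sum.swap_inr] at h
  simp [hermStar, h, pderiv_map]

lemma hol_pderiv (n : ℕ) (j : Fin n) (f : MvPolynomial (Fin n) ℂ) :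
    pderiv (Sum.inr j) (hol n f) = 0 := by
  induction f using MvPolynomial.induction_on with
  | C a => simp [hol]
  | add p q hp hq => simp [hp, hq]
  | mul_X p i hp =>
    have : hol n (X i) = X (Sum.inl i) := by simp [hol]
    rw [map_mul, Derivation.leibniz, hp, this, pderiv_X_of_ne (by simp)]
    simp

lemma sigma_zero {n : ℕ} {f : CPoly n} (hf : f ∈ SigmaH n) : 0 ≤ (constantCoeff f).re := by
  obtain ⟨k, p, rfl⟩ := hf
  rw [map_sum, Complex.re_sum]
  refine Finset.sum_nonneg fun i _ => ?_
  rw [map_mul, hs_constantCoeff, Complex.mul_conj]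
  exact_mod_cast Complex.normSq_nonneg _

lemma sigma_one {n : ℕ} (j : Fin n) {f : CPoly n} (hf : f ∈ SigmaH n) :
    0 ≤ (constantCoeff (pderiv (Sum.inl j) (pderiv (Sum.inr j) f))).re := by
  obtain ⟨k, p, rfl⟩ := hf
  rw [map_sum, map_sum, map_sum, Complex.re_sum]
  refine Finset.sum_nonneg fun i _ => ?_
  rw [Derivation.leibniz, hol_pderiv, hs_pderiv, smul_zero, add_zero, smul_eq_mul,
    Derivation.leibniz, hs_pderiv']
  have : pderiv (Sum.inr j) (pderiv (Sum.inl j) (hol n (p i))) = 0 := by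
    have h : pderiv (Sum.inl j) (hol n (p i)) = hol n (pderiv j (p i)) :=
      pderiv_rename Sum.inl_injective _ _
    rw [h, hol_pderiv]
  rw [this, map_zero, smul_zero, zero_add, smul_eq_mul, map_mul, hs_constantCoeff, mul_comm,
    Complex.mul_conj]
  exact_mod_cast Complex.normSq_nonneg _

lemma normZ_zero (n : ℕ) : constantCoeff (normZ n) = 0 := by
  simp [normZ]

lemma normZ_r (n : ℕ) (j : Fin n) : pderiv (Sum.inr j) (normZ n) = X (Sum.inl j) := by
  simp [normZ, Derivation.leibniz, pderiv_X, Pi.single_apply]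

lemma normZ_l (n : ℕ) (j : Fin n) : pderiv (Sum.inl j) (normZ n) = X (Sum.inr j) := by
  simp [normZ, Derivation.leibniz, pderiv_X, Pi.single_apply]

lemma mul_L {n : ℕ} (j : Fin n) (q : CPoly n) :
    constantCoeff (pderiv (Sum.inl j) (pderiv (Sum.inr j) (q * (1 - normZ n)))) =
      constantCoeff (pderiv (Sum.inl j) (pderiv (Sum.inr j) q)) - constantCoeff q := by
  simp [Derivation.leibniz, normZ_r, normZ_l, normZ_zero]
  ring

/-- Example `pssarchhermmod`: for `0 < ε < 1`, the polynomial `ε + (1 - ‖z‖²)²` is not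
in the hermitian module `Σ_h + Σ_h·(1 - ‖z‖²)`. -/
theorem statement13 (n : ℕ) (hn : 0 < n) (ε : ℝ) (hε0 : 0 < ε) (hε1 : ε < 1) :
    ¬ ∃ p ∈ SigmaH n, ∃ q ∈ SigmaH n,
      C (ε : ℂ) + (1 - normZ n) ^ 2 = p + q * (1 - normZ n) := by
  rintro ⟨p, hp, q, hq, h⟩
  let j : Fin n := ⟨0, hn⟩
  have h0 := congrArg (fun f => (constantCoeff f).re) h
  have h1 := congrArg
    (fun f => (constantCoeff (pderiv (Sum.inl j) (pderiv (Sum.inr j) f))).re) h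
  have hp0 := sigma_zero hp
  have hp1 := sigma_one j hp
  have hq1 := sigma_one j hq
  simp only [map_add, mul_L, pow_two, pderiv_C, map_zero, zero_add] at h1
  simp [normZ_zero] at h0
  simp [normZ_zero, normZ_r] at h1
  linarith

end
end
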